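/- arXiv:1801.00139 — 4 statements merged into one kernel-verified Lean document; each statement's English description precedes it below -/
import Mathlib

section
/- There exists a sequence f_{1,∞} = (f_1, f_2, …) of surjective continuous maps from I = [0,1] to itself that converges uniformly to a continuous map f: I → I, such that the nonautonomous system (I, f_{1,∞}) is Li-Yorke chaotic while h_S(f_{1,∞}) = 0 for every strictly increasing sequence S of positive integers. -/
open Filter Topology

noncomputable section

/-- The unit interval `[0,1]` as a type. -/
abbrev UI : Type := unitInterval

/-- Iterates of a nonautonomous system: `trajN f n = f_n ∘ ⋯ ∘ f_1` (0-indexed sequence). -/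
def trajN (f : ℕ → UI → UI) : ℕ → UI → UI
  | 0 => id
  | n + 1 => f n ∘ trajN f n

/-- `x, y` form a Li-Yorke pair for the nonautonomous system `f`. -/
def IsLYPair (f : ℕ → UI → UI) (x y : UI) : Prop :=
  0 < Filter.limsup (fun n => dist (trajN f n x) (trajN f n y)) Filter.atTop ∧
    Filter.liminf (fun n => dist (trajN f n x) (trajN f n y)) Filter.atTop = 0

/-- The nonautonomous system `f` is Li-Yorke chaotic: there is an uncountable scrambled set. -/
def LiYorkeChaotic (f : ℕ → UI → UI) : Prop :=
  ∃ S : Set UI, ¬ S.Countable ∧ ∀ x ∈ S, ∀ y ∈ S, x ≠ y → IsLYPair f x y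

/-- `E` is an `(n, ε, A)`-separated set for the nonautonomous system `f`. -/
def IsSepSet (f : ℕ → UI → UI) (A : ℕ → ℕ) (n : ℕ) (ε : ℝ) (E : Set UI) : Prop :=
  ∀ x ∈ E, ∀ y ∈ E, x ≠ y → ∃ j < n, ε < dist (trajN f (A j) x) (trajN f (A j) y)

/-- Maximal cardinality of an `(n, ε, A)`-separated set. -/
def sepNum (f : ℕ → UI → UI) (A : ℕ → ℕ) (n : ℕ) (ε : ℝ) : ℕ :=
  sSup {m : ℕ | ∃ E : Finset UI, E.card = m ∧ IsSepSet f A n ε ↑E}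

/-- Topological sequence entropy of the nonautonomous system `f` with respect to the
increasing sequence `A` (the limit as `ε → 0⁺` is realized as a supremum over `ε > 0`,
since the inner quantity is antitone in `ε`). -/
def seqEntropy (f : ℕ → UI → UI) (A : ℕ → ℕ) : EReal :=
  ⨆ ε ∈ Set.Ioi (0 : ℝ),
    Filter.limsup
      (fun n => ((Real.log (sepNum f A n ε) / (A (n - 1) : ℝ) : ℝ) : EReal)) Filter.atTop

/-- `E` is an `(n, ε)`-separated set for the nonautonomous system `f`. -/
def IsSepSetT (f : ℕ → UI → UI) (n : ℕ) (ε : ℝ) (E : Set UI) : Prop :=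
  ∀ x ∈ E, ∀ y ∈ E, x ≠ y → ∃ j < n, ε < dist (trajN f j x) (trajN f j y)

/-- Maximal cardinality of an `(n, ε)`-separated set. -/
def sepNumT (f : ℕ → UI → UI) (n : ℕ) (ε : ℝ) : ℕ :=
  sSup {m : ℕ | ∃ E : Finset UI, E.card = m ∧ IsSepSetT f n ε ↑E}

/-- Topological entropy of the nonautonomous system `f` (the limit as `ε → 0⁺` is realized
as a supremum over `ε > 0`, since the inner quantity is antitone in `ε`). -/
def topEntropyNDS (f : ℕ → UI → UI) : EReal :=
  ⨆ ε ∈ Set.Ioi (0 : ℝ),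
    Filter.limsup (fun n => ((Real.log (sepNumT f n ε) / (n : ℝ) : ℝ) : EReal)) Filter.atTop

/-- Turning times. -/
def turnSet : Set ℝ := Set.range (fun k : ℕ => (4 : ℝ) ^ k)

/-- Logarithm of the exponent of the `n`-th iterate. -/
def qq (n : ℕ) : ℝ := Metric.infDist (1 + √(n : ℝ)) turnSet

/-- The power map on the unit interval. -/
def powU (a : ℝ) (x : UI) : UI :=
  ⟨(x : ℝ) ^ Real.exp a, Real.rpow_nonneg x.2.1 _,
    Real.rpow_le_one x.2.1 x.2.2 (Real.exp_pos a).le⟩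

theorem powU_coe (a : ℝ) (x : UI) : ((powU a x : UI) : ℝ) = (x : ℝ) ^ Real.exp a := rfl

theorem powU_comp (a b : ℝ) (x : UI) : powU a (powU b x) = powU (b + a) x := by
  apply Subtype.ext
  rw [powU_coe, powU_coe, powU_coe, ← Real.rpow_mul x.2.1, Real.exp_add]

theorem powU_zero (x : UI) : powU 0 x = x := by
  apply Subtype.ext
  rw [powU_coe]; simp

theorem powU_mono (a : ℝ) : Monotone (powU a) := by
  intro x y h
  show (x : ℝ) ^ Real.exp a ≤ (y : ℝ) ^ Real.exp a
  exact Real.rpow_le_rpow x.2.1 h (Real.exp_pos a).le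

theorem powU_cont : Continuous (fun p : ℝ × UI => powU p.1 p.2) := by
  apply Continuous.subtype_mk
  apply Continuous.rpow
  · fun_prop
  · fun_prop
  · intro p; right; exact Real.exp_pos _

/-- The system. -/
def sysF (n : ℕ) (x : UI) : UI := powU (qq (n + 1) - qq n) x

theorem turnSet_nonempty : turnSet.Nonempty := Set.range_nonempty _

theorem qq_zero_of (n k : ℕ) (h : 1 + √(n : ℝ) = 4 ^ k) : qq n = 0 := by
  unfold qq
  rw [h]
  exact Metric.infDist_zero_of_mem ⟨k, rfl⟩

theorem traj_eq (n : ℕ) : trajN sysF n = powU (qq n) := by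
  induction n with
  | zero =>
    funext x
    rw [qq_zero_of 0 0 (by simp), powU_zero]; rfl
  | succ n ih =>
    funext x
    show sysF n (trajN sysF n x) = _
    rw [ih, sysF, powU_comp]; congr 1; ring

theorem qq_diff : Tendsto (fun n => qq (n + 1) - qq n) atTop (𝓝 0) := by
  have hb : ∀ n : ℕ, 0 < n → |qq (n + 1) - qq n| ≤ (√(n : ℝ))⁻¹ := by
    intro n hn
    have h1 := (Metric.lipschitz_infDist_pt turnSet).dist_le_mul
      (1 + √((n + 1 : ℕ) : ℝ)) (1 + √(n : ℝ))
    rw [Real.dist_eq, Real.dist_eq] at h1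
    refine h1.trans ?_
    rw [NNReal.coe_one, one_mul, add_sub_add_left_eq_sub]
    have h2 : 0 < √(n : ℝ) := Real.sqrt_pos.2 (by exact_mod_cast hn)
    have h3 : √(n : ℝ) ≤ √((n + 1 : ℕ) : ℝ) := Real.sqrt_le_sqrt (by push_cast; linarith)
    have h4 : √(n : ℝ) ^ 2 = n := Real.sq_sqrt (by positivity)
    have h5 : √((n + 1 : ℕ) : ℝ) ^ 2 = n + 1 := by
      rw [Real.sq_sqrt (by positivity)]; push_cast; ring
    rw [abs_of_nonneg (by linarith), inv_eq_one_div, le_div_iff₀ h2]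
    push_cast at *
    nlinarith
  have hz : Tendsto (fun n : ℕ => (√(n : ℝ))⁻¹) atTop (𝓝 0) :=
    tendsto_inv_atTop_zero.comp (Real.tendsto_sqrt_atTop.comp tendsto_natCast_atTop_atTop)
  exact squeeze_zero_norm' ((eventually_gt_atTop 0).mono hb) hz

theorem sqrt_aux (m : ℕ) (hm : 1 ≤ m) : 1 + √(((m - 1) ^ 2 : ℕ) : ℝ) = m := by
  rw [Nat.cast_pow, Real.sqrt_sq (by positivity), Nat.cast_sub hm]; simp

theorem freq_zero : ∃ᶠ n in atTop, qq n = 0 := by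
  rw [frequently_atTop]
  intro N
  refine ⟨(4 ^ (N + 1) - 1) ^ 2, ?_, ?_⟩
  · have h : N + 1 < 4 ^ (N + 1) := Nat.lt_pow_self (by norm_num)
    have : N ≤ 4 ^ (N + 1) - 1 := by omega
    nlinarith
  · apply qq_zero_of _ (N + 1)
    rw [sqrt_aux _ (Nat.one_le_pow _ _ (by norm_num))]; push_cast; rfl

theorem freq_large (C : ℝ) : ∃ᶠ n in atTop, C ≤ qq n := by
  rw [frequently_atTop]
  intro N
  obtain ⟨M, hM⟩ := exists_nat_ge C
  set k := max N M with hk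
  have h : k < 4 ^ k := Nat.lt_pow_self (by norm_num)
  have hN : N ≤ k := le_max_left _ _
  have hM' : M ≤ k := le_max_right _ _
  refine ⟨(2 * 4 ^ k - 1) ^ 2, ?_, ?_⟩
  · have : N ≤ 2 * 4 ^ k - 1 := by omega
    nlinarith
  · have hC : C ≤ (4 : ℝ) ^ k := by
      have : (M : ℝ) ≤ ((4 ^ k : ℕ) : ℝ) := by exact_mod_cast (by omega)
      push_cast at this; linarith
    refine hC.trans ?_
    unfold qq
    rw [sqrt_aux _ (by omega), Metric.le_infDist turnSet_nonempty]
    rintro _ ⟨j, rfl⟩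
    rw [Real.dist_eq]
    push_cast
    rcases le_or_gt j k with hj | hj
    · have : (4 : ℝ) ^ j ≤ 4 ^ k := pow_le_pow_right₀ (by norm_num) hj
      exact le_trans (by linarith) (le_abs_self _)
    · have : (4 : ℝ) ^ (k + 1) ≤ 4 ^ j := pow_le_pow_right₀ (by norm_num) hj
      rw [pow_succ] at this
      have h0 : (0 : ℝ) < 4 ^ k := by positivity
      exact le_trans (by linarith) (neg_le_abs _)

theorem sysF_LY (x y : UI) (hx : (x : ℝ) < 1) (hy : (y : ℝ) < 1) (hxy : x ≠ y) :
    IsLYPair sysF x y := by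
  unfold IsLYPair
  simp only [traj_eq]
  have hbd : ∀ n, dist (powU (qq n) x) (powU (qq n) y) ≤ 1 := fun n => by
    rw [Subtype.dist_eq, Real.dist_eq, abs_le]
    have a := (powU (qq n) x).2
    have b := (powU (qq n) y).2
    constructor <;> linarith [a.1, a.2, b.1, b.2]
  have hB : IsBoundedUnder (· ≤ ·) atTop (fun n => dist (powU (qq n) x) (powU (qq n) y)) :=
    isBoundedUnder_of ⟨1, hbd⟩
  have hB' : IsBoundedUnder (· ≥ ·) atTop (fun n => dist (powU (qq n) x) (powU (qq n) y)) :=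
    isBoundedUnder_of ⟨0, fun n => dist_nonneg⟩
  constructor
  · refine lt_of_lt_of_le (dist_pos.2 hxy) ?_
    refine le_limsup_of_frequently_le (freq_zero.mono ?_) hB
    intro n hn
    simp only [hn, powU_zero]; exact le_rfl
  · apply le_antisymm
    · apply le_of_forall_pos_le_add
      intro ε hε
      rw [zero_add]
      refine liminf_le_of_frequently_le ?_ hB'
      have key : ∀ z : UI, (z : ℝ) < 1 → ∃ C, ∀ c ≥ C, (powU c z : ℝ) ≤ ε := by
        intro z hz
        have h1 : Tendsto (fun c : ℝ => (z : ℝ) ^ c) atTop (𝓝 0) :=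
          tendsto_rpow_atTop_of_base_lt_one _ (by linarith [z.2.1]) hz
        have h2 := (h1.comp Real.tendsto_exp_atTop).eventually (ge_mem_nhds hε)
        exact eventually_atTop.1 h2
      obtain ⟨C, hC⟩ := key x hx
      obtain ⟨D, hD⟩ := key y hy
      refine (freq_large (max C D)).mono ?_
      intro n hn
      have a := hC (qq n) (le_trans (le_max_left _ _) hn)
      have b := hD (qq n) (le_trans (le_max_right _ _) hn)
      rw [Subtype.dist_eq, Real.dist_eq, abs_le]
      constructor <;> linarith [(powU (qq n) x).2.1, (powU (qq n) y).2.1]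
    · exact le_liminf_of_le hB.isCoboundedUnder_ge (Eventually.of_forall fun n => dist_nonneg)

theorem sep_card (f : ℕ → UI → UI) (hf : ∀ n, Monotone (trajN f n)) (A : ℕ → ℕ) (n : ℕ)
    (ε : ℝ) (hε : 0 < ε) (E : Finset UI) (hE : IsSepSet f A n ε ↑E) :
    E.card ≤ n * ⌊1 / ε⌋₊ + 1 := by
  classical
  let F : UI → ℕ := fun x => ∑ j ∈ Finset.range n, ⌊(trajN f (A j) x : ℝ) / ε⌋₊
  have hlt : ∀ x ∈ E, ∀ y ∈ E, x < y → F x < F y := by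
    intro x hx y hy hxy
    obtain ⟨j, hj, hd⟩ := hE x hx y hy hxy.ne
    apply Finset.sum_lt_sum
    · intro i _
      have : (trajN f (A i) x : ℝ) ≤ trajN f (A i) y := hf _ hxy.le
      gcongr
    · refine ⟨j, Finset.mem_range.2 hj, ?_⟩
      have h1 : (trajN f (A j) x : ℝ) ≤ trajN f (A j) y := hf _ hxy.le
      rw [Subtype.dist_eq, Real.dist_eq, abs_sub_comm, abs_of_nonneg (by linarith)] at hd
      have h0 : 0 ≤ (trajN f (A j) x : ℝ) / ε := div_nonneg (trajN f (A j) x).2.1 hε.le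
      rw [Nat.lt_iff_add_one_le, ← Nat.floor_add_one h0]
      apply Nat.floor_le_floor
      rw [← sub_nonneg]
      have : (trajN f (A j) y : ℝ) / ε - ((trajN f (A j) x : ℝ) / ε + 1)
        = ((trajN f (A j) y : ℝ) - trajN f (A j) x - ε) / ε := by field_simp; ring
      rw [this]; apply div_nonneg _ hε.le; linarith
  have hcard := Finset.card_le_card_of_injOn (s := E)
    (t := Finset.range (n * ⌊1 / ε⌋₊ + 1)) F ?_ ?_
  · simpa using hcard
  · intro x _
    simp only [Finset.coe_range, Set.mem_Iio]
    apply Nat.lt_succ_of_le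
    calc F x ≤ ∑ j ∈ Finset.range n, ⌊1 / ε⌋₊ := by
          apply Finset.sum_le_sum
          intro i _
          have := (trajN f (A i) x).2.2
          gcongr
      _ = _ := by simp
  · intro x hx y hy h
    rcases lt_trichotomy x y with h' | h' | h'
    · exact absurd h (hlt x hx y hy h').ne
    · exact h'
    · exact absurd h (hlt y hy x hx h').ne'

theorem sepNum_le (f : ℕ → UI → UI) (hf : ∀ n, Monotone (trajN f n)) (A : ℕ → ℕ) (n : ℕ)
    (ε : ℝ) (hε : 0 < ε) : sepNum f A n ε ≤ n * ⌊1 / ε⌋₊ + 1 := by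
  refine csSup_le (Set.nonempty_of_mem (x := 0) ⟨∅, by simp, by simp [IsSepSet]⟩) ?_
  rintro m ⟨E, rfl, hE⟩
  exact sep_card f hf A n ε hε E hE

theorem mono_entropy (f : ℕ → UI → UI) (hf : ∀ n, Monotone (trajN f n)) (A : ℕ → ℕ)
    (hA : StrictMono A) (hpos : ∀ n, 0 < A n) : seqEntropy f A = 0 := by
  have hAn : ∀ n, n + 1 ≤ A n := by
    intro n
    induction n with
    | zero => exact hpos 0
    | succ n ih => have := hA (Nat.lt_succ_self n); simp only [Nat.succ_eq_add_one] at this; omega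
  have key : ∀ ε ∈ Set.Ioi (0 : ℝ), Filter.limsup
      (fun n => ((Real.log (sepNum f A n ε) / (A (n - 1) : ℝ) : ℝ) : EReal)) atTop = 0 := by
    intro ε hε
    apply Tendsto.limsup_eq
    rw [← EReal.coe_zero, EReal.tendsto_coe]
    set M := ⌊1 / ε⌋₊ + 1 with hM
    have hlim : Tendsto (fun n : ℕ => Real.log (M * 2) / n + Real.log n / n) atTop (𝓝 0) := by
      rw [← add_zero (0 : ℝ)]
      apply Tendsto.add
      · exact tendsto_const_div_atTop_nhds_zero_nat _
      · have := Real.isLittleO_log_id_atTop.tendsto_div_nhds_zero.comp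
          (tendsto_natCast_atTop_atTop (R := ℝ))
        exact this
    refine squeeze_zero' (Eventually.of_forall fun n => ?_) ?_ hlim
    · exact div_nonneg (Real.log_natCast_nonneg _) (Nat.cast_nonneg _)
    · filter_upwards [eventually_ge_atTop 1] with n hn
      have h1 := sepNum_le f hf A n ε hε
      have hn' : (0 : ℝ) < n := by exact_mod_cast hn
      have hMp : (0 : ℝ) < M * 2 := by positivity
      rw [← add_div, ← Real.log_mul hMp.ne' hn'.ne']
      have h2 : (n : ℝ) ≤ A (n - 1) := by
        have := hAn (n - 1)
        exact_mod_cast (by omega)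
      have h3 : Real.log (sepNum f A n ε) ≤ Real.log (M * 2 * n) := by
        rcases Nat.eq_zero_or_pos (sepNum f A n ε) with h | h
        · rw [h]; simp only [Nat.cast_zero, Real.log_zero]
          have : (M : ℝ) * 2 * n = ((M * 2 * n : ℕ) : ℝ) := by push_cast; ring
          rw [this]; exact Real.log_natCast_nonneg _
        · apply Real.log_le_log (by exact_mod_cast h)
          have : sepNum f A n ε ≤ M * 2 * n := by
            refine h1.trans ?_
            rw [hM]; nlinarith [Nat.zero_le (n * ⌊1 / ε⌋₊)]
          exact_mod_cast this
      have h4 : 0 ≤ Real.log (M * 2 * n) := le_trans (Real.log_natCast_nonneg _) h3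
      exact div_le_div₀ h4 h3 hn' h2
  unfold seqEntropy
  rw [biSup_congr key]
  exact biSup_const ⟨1, by simp⟩

/-- There is a uniformly convergent nonautonomous system of surjective continuous interval
maps which is Li-Yorke chaotic but has zero topological sequence entropy with respect to
every strictly increasing sequence of positive integers. -/
theorem exists_nds_uniform_liYorke_zeroSeqEntropy :
    ∃ f : ℕ → UI → UI,
      (∀ n, Continuous (f n)) ∧ (∀ n, Function.Surjective (f n)) ∧
      (∃ g : UI → UI, Continuous g ∧ TendstoUniformly f g Filter.atTop) ∧
      LiYorkeChaotic f ∧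
      (∀ A : ℕ → ℕ, StrictMono A → (∀ n, 0 < A n) → seqEntropy f A = 0) := by
  refine ⟨sysF, ?_, ?_, ⟨id, continuous_id, ?_⟩, ?_, ?_⟩
  · intro n
    exact powU_cont.comp (Continuous.prodMk_right (qq (n + 1) - qq n))
  · intro n x
    refine ⟨powU (-(qq (n + 1) - qq n)) x, ?_⟩
    rw [sysF, powU_comp, neg_add_cancel, powU_zero]
  · have h := Continuous.tendstoUniformly (fun a x => powU a x) powU_cont 0
    have h0 : powU 0 = id := funext powU_zero
    rw [h0] at h
    intro u hu
    exact qq_diff.eventually (h u hu)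
  · refine ⟨Set.Ioo 0 1, ?_, ?_⟩
    · intro hc
      have h1 := hc.image (Subtype.val : UI → ℝ)
      have h2 : Set.Ioo (0 : ℝ) 1 ⊆ Subtype.val '' (Set.Ioo (0 : UI) 1) := by
        intro x hx
        exact ⟨⟨x, hx.1.le, hx.2.le⟩, ⟨hx.1, hx.2⟩, rfl⟩
      have h3 := h1.mono h2
      rw [← Cardinal.le_aleph0_iff_set_countable, Cardinal.mk_Ioo_real one_pos] at h3
      exact absurd h3 (not_le.2 Cardinal.aleph0_lt_continuum)
    · intro x hx y hy hxy
      exact sysF_LY x y hx.2 hy.2 hxy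
  · intro A hA hpos
    exact mono_entropy sysF (fun n => by rw [traj_eq]; exact powU_mono _) A hA hpos
end
end

section
/- There exists a surjective continuous map f: [0,1] → [0,1] such that: (1) f has zero topological entropy; (2) f has exactly one infinite ω-limit set ω̃, and ω̃ is homeomorphic to the Cantor set with f restricted to ω̃ minimal; (3) f is not Li-Yorke chaotic; and (4) there is a family {G_n}_{n∈ℤ} of pairwise disjoint nondegenerate compact subintervals of (0,1) with f(G_n) = G_{n+1} for every n ∈ ℤ. -/
open Filter Topology

noncomputable section

/-- The ω-limit set of `x` under `f`: the set of limit points of the sequence `(f^n x)`. -/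
def omegaSet (f : UI → UI) (x : UI) : Set UI :=
  {y | MapClusterPt y Filter.atTop fun n => f^[n] x}

/-! ### The auxiliary real map -/

/-- Clamped displacement from `1/2`. -/
def auxS (u : ℝ) : ℝ := max (-(1 / 6)) (min (u - 1 / 2) (1 / 6))

/-- The profile of the map on `[1/3, 1]`, extended by constants. -/
def auxH (u : ℝ) : ℝ :=
  min (7 / 9) (1 / 2 - auxS u / (2 - 10 * |auxS u|)) + max 0 (min (u - 2 / 3) (1 / 3))

/-- The map on the real line; `[0,1]` is invariant. -/
def FF (u : ℝ) : ℝ := 1 - ∑' n : ℕ, (1 / 3 : ℝ) ^ n * (7 / 9 - auxH (3 ^ n * u))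

lemma auxS_abs (u : ℝ) : |auxS u| ≤ 1 / 6 := by
  unfold auxS
  rw [abs_le]
  exact ⟨le_max_left _ _, max_le (by norm_num) (min_le_right _ _)⟩

lemma auxS_den (u : ℝ) : 0 < 2 - 10 * |auxS u| := by
  have := auxS_abs u
  linarith

lemma auxS_cont : Continuous auxS := by unfold auxS; fun_prop

lemma auxH_cont : Continuous auxH := by
  unfold auxH
  have h : Continuous fun u => auxS u / (2 - 10 * |auxS u|) := by
    refine auxS_cont.div ?_ (fun u => (auxS_den u).ne')
    have := auxS_cont
    fun_prop
  fun_prop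

lemma auxH_le_third {u : ℝ} (h : u ≤ 1 / 3) : auxH u = 7 / 9 := by
  have : auxS u = -(1 / 6) := by
    unfold auxS
    rw [min_eq_left (by linarith), max_eq_left (by linarith)]
  unfold auxH
  rw [this, abs_neg, abs_of_pos (by norm_num), min_eq_left (by linarith : u - 2 / 3 ≤ 1 / 3),
    max_eq_left (by linarith)]
  norm_num

lemma auxS_ge {u : ℝ} (h : 2 / 3 ≤ u) : auxS u = 1 / 6 := by
  unfold auxS
  rw [min_eq_right (by linarith), max_eq_right (by linarith)]

lemma auxH_ge_two {u : ℝ} (h : 2 / 3 ≤ u) (h1 : u ≤ 1) : auxH u = u - 2 / 3 := by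
  unfold auxH
  rw [auxS_ge h, min_eq_left (by linarith : u - 2 / 3 ≤ 1 / 3), max_eq_right (by linarith),
    abs_of_pos (by norm_num)]
  norm_num

lemma auxH_ge_one {u : ℝ} (h1 : 1 ≤ u) : auxH u = 1 / 3 := by
  unfold auxH
  rw [auxS_ge (by linarith), min_eq_right (by linarith : 1 / 3 ≤ u - 2 / 3),
    max_eq_right (by linarith), abs_of_pos (by norm_num)]
  norm_num

lemma auxS_mid {u : ℝ} (h : 1 / 3 ≤ u) (h1 : u ≤ 2 / 3) : auxS u = u - 1 / 2 := by
  unfold auxS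
  rw [min_eq_left (by linarith), max_eq_right (by linarith)]

lemma auxH_mid {u : ℝ} (h : 1 / 3 ≤ u) (h1 : u ≤ 2 / 3) :
    auxH u = min (7 / 9) (1 / 2 - (u - 1 / 2) / (2 - 10 * |u - 1 / 2|)) := by
  unfold auxH
  rw [auxS_mid h h1, min_eq_left (by linarith : u - 2 / 3 ≤ 1 / 3),
    max_eq_left (by linarith), add_zero]

lemma aux_mono {s t : ℝ} (hs : -(1 / 6) ≤ s) (hst : s ≤ t) (ht : t ≤ 1 / 6) :
    s / (2 - 10 * |s|) ≤ t / (2 - 10 * |t|) := by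
  have h1 : |s| ≤ 1 / 6 := abs_le.2 ⟨hs, by linarith⟩
  have h2 : |t| ≤ 1 / 6 := abs_le.2 ⟨by linarith, ht⟩
  rw [div_le_div_iff₀ (by linarith) (by linarith)]
  rcases le_total 0 s with h | h <;> rcases le_total 0 t with h' | h'
  · rw [abs_of_nonneg h, abs_of_nonneg h']; nlinarith
  · rw [abs_of_nonneg h, abs_of_nonpos h']; nlinarith
  · rw [abs_of_nonpos h, abs_of_nonneg h']; nlinarith [mul_nonneg (neg_nonneg.2 h) h']
  · rw [abs_of_nonpos h, abs_of_nonpos h']; nlinarith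

lemma auxH_anti {u v : ℝ} (h : 1 / 3 ≤ u) (huv : u ≤ v) (h1 : v ≤ 2 / 3) : auxH v ≤ auxH u := by
  rw [auxH_mid h (huv.trans h1), auxH_mid (h.trans huv) h1]
  refine min_le_min le_rfl ?_
  have := aux_mono (s := u - 1 / 2) (t := v - 1 / 2) (by linarith) (by linarith) (by linarith)
  linarith

lemma auxH_mem (u : ℝ) : 0 ≤ auxH u ∧ auxH u ≤ 7 / 9 := by
  rcases le_total u (1 / 3) with h | h
  · rw [auxH_le_third h]; norm_num
  rcases le_total u (2 / 3) with h1 | h1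
  · constructor
    · have := auxH_anti h h1 le_rfl
      rw [auxH_ge_two le_rfl (by norm_num)] at this
      linarith
    · rw [auxH_mid h h1]; exact min_le_left _ _
  rcases le_total u 1 with h2 | h2
  · rw [auxH_ge_two h1 h2]; constructor <;> linarith
  · rw [auxH_ge_one h2]; norm_num

lemma auxterm_norm (u : ℝ) (n : ℕ) :
    ‖(1 / 3 : ℝ) ^ n * (7 / 9 - auxH (3 ^ n * u))‖ ≤ (1 / 3 : ℝ) ^ n := by
  rw [norm_mul, Real.norm_of_nonneg (by positivity : (0 : ℝ) ≤ (1 / 3) ^ n)]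
  have := auxH_mem (3 ^ n * u)
  have h : ‖7 / 9 - auxH (3 ^ n * u)‖ ≤ 1 := by
    rw [Real.norm_eq_abs, abs_le]; constructor <;> linarith
  have h2 : (0 : ℝ) ≤ (1 / 3) ^ n := by positivity
  nlinarith

lemma summable_third : Summable fun n : ℕ => (1 / 3 : ℝ) ^ n :=
  summable_geometric_of_lt_one (by norm_num) (by norm_num)

lemma FF_cont : Continuous FF := by
  unfold FF
  refine continuous_const.sub ?_
  refine continuous_tsum (u := fun n : ℕ => (1 / 3 : ℝ) ^ n) (fun n => ?_) summable_third
    (fun n u => auxterm_norm u n)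
  have := auxH_cont
  fun_prop

lemma FF_rec (u : ℝ) : FF u = auxH u - 1 / 9 + FF (3 * u) / 3 := by
  have hs : Summable fun n : ℕ => (1 / 3 : ℝ) ^ n * (7 / 9 - auxH (3 ^ n * u)) :=
    Summable.of_norm_bounded summable_third (auxterm_norm u)
  unfold FF
  rw [hs.tsum_eq_zero_add]
  have : ∀ n : ℕ, (1 / 3 : ℝ) ^ (n + 1) * (7 / 9 - auxH (3 ^ (n + 1) * u)) =
      (1 / 3) * ((1 / 3 : ℝ) ^ n * (7 / 9 - auxH (3 ^ n * (3 * u)))) := by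
    intro n
    rw [pow_succ, pow_succ, mul_assoc ((3 : ℝ) ^ n)]
    ring
  simp only [this]
  rw [tsum_mul_left]
  simp only [pow_zero, one_mul]
  ring

lemma FF_ge_one {u : ℝ} (h : 1 ≤ u) : FF u = 1 / 3 := by
  unfold FF
  have : ∀ n : ℕ, (1 / 3 : ℝ) ^ n * (7 / 9 - auxH (3 ^ n * u)) = (1 / 3 : ℝ) ^ n * (4 / 9) := by
    intro n
    have h3 : (1 : ℝ) ≤ 3 ^ n := one_le_pow₀ (by norm_num)
    rw [auxH_ge_one (by nlinarith)]
    norm_num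
  simp only [this]
  rw [tsum_mul_right, tsum_geometric_of_lt_one (by norm_num) (by norm_num)]
  norm_num

lemma FF_low {u : ℝ} (h : u ≤ 1 / 3) : FF u = 2 / 3 + FF (3 * u) / 3 := by
  rw [FF_rec, auxH_le_third h]; ring

lemma FF_eq_auxH {u : ℝ} (h : 1 / 3 ≤ u) : FF u = auxH u := by
  rw [FF_rec, FF_ge_one (by linarith)]; ring

lemma FF_high {u : ℝ} (h : 2 / 3 ≤ u) (h1 : u ≤ 1) : FF u = u - 2 / 3 := by
  rw [FF_eq_auxH (by linarith), auxH_ge_two h h1]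

lemma FF_anti {u v : ℝ} (h : 1 / 3 ≤ u) (huv : u ≤ v) (h1 : v ≤ 2 / 3) : FF v ≤ FF u := by
  rw [FF_eq_auxH h, FF_eq_auxH (h.trans huv)]
  exact auxH_anti h huv h1

lemma FF_zero : FF 0 = 1 := by
  have := FF_low (u := 0) (by norm_num)
  rw [mul_zero] at this
  linarith

lemma FF_mem {u : ℝ} (hu : u ∈ Set.Icc (0 : ℝ) 1) : FF u ∈ Set.Icc (0 : ℝ) 1 := by
  rcases hu.1.eq_or_lt with h0 | h0
  · rw [← h0, FF_zero]; simp
  obtain ⟨n, hn⟩ := pow_unbounded_of_one_lt (1 / u) (by norm_num : (1 : ℝ) < 3)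
  rw [div_lt_iff₀ h0] at hn
  induction n generalizing u with
  | zero => rw [FF_ge_one (by linarith)]; constructor <;> norm_num
  | succ n ih =>
    rcases le_total u (1 / 3) with h | h
    · rw [FF_low h]
      have := ih (u := 3 * u) ⟨by linarith, by linarith⟩ (by linarith) (by rw [pow_succ] at hn; linarith)
      exact ⟨by linarith [this.1], by linarith [this.2]⟩
    · rw [FF_eq_auxH h]
      have := auxH_mem u
      exact ⟨this.1, by linarith⟩

lemma FF_two {v : ℝ} (hv : v ∈ Set.Icc (0 : ℝ) 1) : FF (FF (v / 3)) = FF v / 3 := by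
  have hm := FF_mem hv
  have h1 : FF (v / 3) = 2 / 3 + FF v / 3 := by
    rw [FF_low (by linarith [hv.2])]
    congr 3; ring
  rw [h1, FF_high (by linarith [hm.1]) (by linarith [hm.2])]
  ring

/-- On the central invariant interval the map is explicitly conjugate to `t ↦ 2 t` with a flip. -/
lemma FF_center {σ t : ℝ} (hσ : |σ| = 1) (ht : 0 < t) :
    FF (1 / 2 + σ / (10 * (1 + t))) = 1 / 2 + (-σ) / (10 * (1 + 2 * t)) := by
  have ha : |σ / (10 * (1 + t))| = 1 / (10 * (1 + t)) := by
    rw [abs_div, hσ, abs_of_pos (by positivity : 0 < 10 * (1 + t))]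
  have hb : 1 / (10 * (1 + t)) ≤ 1 / 10 := by
    apply one_div_le_one_div_of_le <;> linarith
  have hc := abs_le.1 (ha.le.trans hb)
  have hd : -σ / (10 * (1 + 2 * t)) ≤ 1 / 10 := by
    have : -σ ≤ 1 := by rw [← hσ]; exact neg_le_abs σ
    rw [div_le_div_iff₀ (by positivity) (by norm_num)]
    nlinarith
  rw [FF_eq_auxH (by linarith), auxH_mid (by linarith) (by linarith)]
  rw [add_sub_cancel_left, ha]
  have he : 1 / 2 - σ / (10 * (1 + t)) / (2 - 10 * (1 / (10 * (1 + t)))) =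
      1 / 2 + (-σ) / (10 * (1 + 2 * t)) := by
    have : (2 - 10 * (1 / (10 * (1 + t)))) = (1 + 2 * t) / (1 + t) := by
      field_simp; ring
    rw [this]
    field_simp
    ring
  rw [he]
  exact min_eq_right (by linarith)

/-! ### Dynamics of the map -/

lemma FF_third {v : ℝ} (hv : v ∈ Set.Icc (0 : ℝ) 1) : FF (v / 3) = (2 + FF v) / 3 := by
  rw [FF_low (by linarith [hv.2]), mul_div_cancel₀ v (by norm_num : (3 : ℝ) ≠ 0)]
  ring

lemma FF_third' {v : ℝ} (hv : v ∈ Set.Icc (0 : ℝ) 1) : FF ((2 + v) / 3) = v / 3 := by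
  rw [FF_high (by linarith [hv.1]) (by linarith [hv.2])]
  ring

lemma iter_mem {u : ℝ} (hu : u ∈ Set.Icc (0 : ℝ) 1) (n : ℕ) : FF^[n] u ∈ Set.Icc (0 : ℝ) 1 := by
  induction n with
  | zero => exact hu
  | succ n ih => rw [Function.iterate_succ_apply']; exact FF_mem ih

lemma iter_even {v : ℝ} (hv : v ∈ Set.Icc (0 : ℝ) 1) (n : ℕ) :
    FF^[2 * n] (v / 3) = FF^[n] v / 3 := by
  induction n with
  | zero => rfl
  | succ n ih =>
    rw [show 2 * (n + 1) = 2 * n + 1 + 1 from rfl, Function.iterate_succ_apply',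
      Function.iterate_succ_apply', ih, FF_two (iter_mem hv n), ← Function.iterate_succ_apply' FF n]

lemma iter_odd {v : ℝ} (hv : v ∈ Set.Icc (0 : ℝ) 1) (n : ℕ) :
    FF^[2 * n + 1] (v / 3) = (2 + FF^[n + 1] v) / 3 := by
  rw [Function.iterate_succ_apply', iter_even hv, FF_third (iter_mem hv n),
    ← Function.iterate_succ_apply' FF n]

lemma dist_low {v w : ℝ} (hv : v ∈ Set.Icc (0 : ℝ) 1) (hw : w ∈ Set.Icc (0 : ℝ) 1) (m : ℕ) :
    |FF^[m] (v / 3) - FF^[m] (w / 3)| = |FF^[(m + 1) / 2] v - FF^[(m + 1) / 2] w| / 3 := by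
  rw [show (3 : ℝ) = |3| from (abs_of_pos (by norm_num)).symm, ← abs_div,
    abs_of_pos (by norm_num : (0 : ℝ) < 3)]
  rcases Nat.even_or_odd' m with ⟨k, rfl | rfl⟩
  · rw [iter_even hv, iter_even hw, show (2 * k + 1) / 2 = k by omega]
    ring_nf
  · rw [iter_odd hv, iter_odd hw, show (2 * k + 1 + 1) / 2 = k + 1 by omega]
    ring_nf

lemma dist_high {v w : ℝ} (hv : v ∈ Set.Icc (0 : ℝ) 1) (hw : w ∈ Set.Icc (0 : ℝ) 1) (m : ℕ) :
    |FF^[m] ((2 + v) / 3) - FF^[m] ((2 + w) / 3)| = |FF^[m / 2] v - FF^[m / 2] w| / 3 := by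
  cases m with
  | zero =>
    rw [show (3 : ℝ) = |3| from (abs_of_pos (by norm_num)).symm, ← abs_div,
      abs_of_pos (by norm_num : (0 : ℝ) < 3)]
    simp only [Function.iterate_zero, id, Nat.zero_div]
    ring_nf
  | succ k =>
    rw [Function.iterate_succ_apply, Function.iterate_succ_apply, FF_third' hv, FF_third' hw,
      dist_low hv hw]

lemma preC_I {L : ℕ} {x : ℝ} (h : x ∈ preCantorSet L) : x ∈ Set.Icc (0 : ℝ) 1 :=
  preCantorSet_subset_unitInterval h

lemma preC_low {L : ℕ} {v : ℝ} (h : v ∈ preCantorSet L) : v / 3 ∈ preCantorSet (L + 1) :=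
  Or.inl ⟨v, h, rfl⟩

lemma preC_high {L : ℕ} {v : ℝ} (h : v ∈ preCantorSet L) : (2 + v) / 3 ∈ preCantorSet (L + 1) :=
  Or.inr ⟨v, h, rfl⟩

lemma preC_cases {L : ℕ} {x : ℝ} (h : x ∈ preCantorSet (L + 1)) :
    ∃ v ∈ preCantorSet L, x = v / 3 ∨ x = (2 + v) / 3 := by
  rcases h with ⟨v, hv, rfl⟩ | ⟨v, hv, rfl⟩
  · exact ⟨v, hv, Or.inl rfl⟩
  · exact ⟨v, hv, Or.inr rfl⟩

lemma preC_inv {L : ℕ} {x : ℝ} (h : x ∈ preCantorSet L) : FF x ∈ preCantorSet L := by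
  induction L generalizing x with
  | zero => exact FF_mem h
  | succ L ih =>
    obtain ⟨v, hv, rfl | rfl⟩ := preC_cases h
    · rw [FF_third (preC_I hv)]; exact preC_high (ih hv)
    · rw [FF_third' (preC_I hv)]; exact preC_low hv

lemma preC_iter {L : ℕ} {x : ℝ} (h : x ∈ preCantorSet L) (n : ℕ) :
    FF^[n] x ∈ preCantorSet L := by
  induction n with
  | zero => exact h
  | succ n ih => rw [Function.iterate_succ_apply']; exact preC_inv ih

lemma preC_dense_aux {L : ℕ}
    (ih : ∀ z ∈ preCantorSet L, ∀ w ∈ preCantorSet L, ∃ n, |FF^[n] z - w| ≤ (1 / 3 : ℝ) ^ L)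
    {v w : ℝ} (hv : v ∈ preCantorSet L) (hw : w ∈ preCantorSet (L + 1)) :
    ∃ n, |FF^[n] (v / 3) - w| ≤ (1 / 3 : ℝ) ^ (L + 1) := by
  obtain ⟨w', hw', rfl | rfl⟩ := preC_cases hw
  · obtain ⟨n, hn⟩ := ih v hv w' hw'
    refine ⟨2 * n, ?_⟩
    rw [iter_even (preC_I hv), ← sub_div, abs_div, abs_of_pos (by norm_num : (0 : ℝ) < 3), pow_succ]
    linarith
  · obtain ⟨n, hn⟩ := ih (FF v) (preC_inv hv) w' hw'
    refine ⟨2 * n + 1, ?_⟩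
    rw [iter_odd (preC_I hv), ← sub_div, abs_div, abs_of_pos (by norm_num : (0 : ℝ) < 3), pow_succ,
      Function.iterate_succ_apply, add_sub_add_left_eq_sub]
    linarith

lemma preC_dense (L : ℕ) :
    ∀ z ∈ preCantorSet L, ∀ w ∈ preCantorSet L, ∃ n, |FF^[n] z - w| ≤ (1 / 3 : ℝ) ^ L := by
  induction L with
  | zero =>
    intro z hz w hw
    refine ⟨0, ?_⟩
    have h1 := preC_I hz
    have h2 := preC_I hw
    simp only [Function.iterate_zero, id, pow_zero, abs_le]
    constructor <;> linarith [h1.1, h1.2, h2.1, h2.2]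
  | succ L ih =>
    intro z hz w hw
    obtain ⟨v, hv, rfl | rfl⟩ := preC_cases hz
    · exact preC_dense_aux ih hv hw
    · obtain ⟨n, hn⟩ := preC_dense_aux ih hv hw
      refine ⟨n + 1, ?_⟩
      rw [Function.iterate_succ_apply, FF_third' (preC_I hv)]
      exact hn

lemma preC_opp {v w : ℝ} (hv : v ∈ Set.Icc (0 : ℝ) 1) (hw : w ∈ Set.Icc (0 : ℝ) 1) (n : ℕ) :
    1 / 3 ≤ |FF^[n] (v / 3) - FF^[n] ((2 + w) / 3)| := by
  cases n with
  | zero =>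
    simp only [Function.iterate_zero, id]
    rw [abs_sub_comm]
    refine le_trans ?_ (le_abs_self _)
    linarith [hv.2, hw.1]
  | succ n =>
    rw [Function.iterate_succ_apply FF n ((2 + w) / 3), FF_third' hw]
    rcases Nat.even_or_odd' n with ⟨k, rfl | rfl⟩
    · rw [iter_odd hv, iter_even hw]
      refine le_trans ?_ (le_abs_self _)
      linarith [(iter_mem hv (k + 1)).1, (iter_mem hw k).2]
    · rw [show 2 * k + 1 + 1 = 2 * (k + 1) from rfl, iter_even hv, iter_odd hw, abs_sub_comm]
      refine le_trans ?_ (le_abs_self _)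
      linarith [(iter_mem hv (k + 1)).2, (iter_mem hw (k + 1)).1]

lemma preC_dich (L : ℕ) : ∀ x ∈ preCantorSet L, ∀ y ∈ preCantorSet L,
    (∀ n, |FF^[n] x - FF^[n] y| ≤ (1 / 3 : ℝ) ^ L) ∨
      (∀ n, (1 / 3 : ℝ) ^ L ≤ |FF^[n] x - FF^[n] y|) := by
  induction L with
  | zero =>
    intro x hx y hy
    left
    intro n
    have h1 := iter_mem (preC_I hx) n
    have h2 := iter_mem (preC_I hy) n
    rw [pow_zero, abs_le]
    constructor <;> linarith [h1.1, h1.2, h2.1, h2.2]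
  | succ L ih =>
    have hpow : (1 / 3 : ℝ) ^ (L + 1) ≤ 1 / 3 := by
      rw [pow_succ]
      have : (1 / 3 : ℝ) ^ L ≤ 1 := pow_le_one₀ (by norm_num) (by norm_num)
      linarith
    intro x hx y hy
    obtain ⟨v, hv, rfl | rfl⟩ := preC_cases hx <;> obtain ⟨w, hw, rfl | rfl⟩ := preC_cases hy
    · simp only [dist_low (preC_I hv) (preC_I hw), pow_succ]
      refine (ih v hv w hw).imp (fun h n => ?_) (fun h n => ?_) <;> linarith [h ((n + 1) / 2)]
    · right; intro n; exact hpow.trans (preC_opp (preC_I hv) (preC_I hw) n)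
    · right; intro n; rw [abs_sub_comm]; exact hpow.trans (preC_opp (preC_I hw) (preC_I hv) n)
    · simp only [dist_high (preC_I hv) (preC_I hw), pow_succ]
      refine (ih v hv w hw).imp (fun h n => ?_) (fun h n => ?_) <;> linarith [h (n / 2)]

/-- `x` is asymptotic to a periodic point. -/
def AP (x : ℝ) : Prop := ∃ z ∈ Set.Icc (0 : ℝ) 1, ∃ p > 0, FF^[p] z = z ∧
  Tendsto (fun n => |FF^[n] x - FF^[n] z|) atTop (𝓝 0)

/-- The orbit of `x` enters every pre-Cantor set. -/
def EvC (x : ℝ) : Prop := ∀ L, ∃ t, FF^[t] x ∈ preCantorSet L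

lemma periodic_mul {z : ℝ} {p : ℕ} (h : FF^[p] z = z) (k : ℕ) : FF^[p * k] z = z := by
  rw [Function.iterate_mul]; exact Function.iterate_fixed h k

lemma AP_shift {x : ℝ} {t : ℕ} (h : AP (FF^[t] x)) : AP x := by
  obtain ⟨z, hz, p, hp, hper, hlim⟩ := h
  have key : FF^[t] (FF^[p * t - t] z) = z := by
    rw [← Function.iterate_add_apply, Nat.add_sub_cancel' (Nat.le_mul_of_pos_left t hp)]
    exact periodic_mul hper t
  refine ⟨FF^[p * t - t] z, iter_mem hz _, p, hp, ?_, ?_⟩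
  · rw [← Function.iterate_add_apply, add_comm, Function.iterate_add_apply, hper]
  · rw [← tendsto_add_atTop_iff_nat t]
    simp only [Function.iterate_add_apply, key]
    exact hlim

lemma AP_low {v : ℝ} (hv : v ∈ Set.Icc (0 : ℝ) 1) (h : AP v) : AP (v / 3) := by
  obtain ⟨z, hz, p, hp, hper, hlim⟩ := h
  refine ⟨z / 3, ⟨by linarith [hz.1], by linarith [hz.2]⟩, 2 * p, by omega, ?_, ?_⟩
  · rw [iter_even hz, hper]
  · simp only [dist_low hv hz]
    have ht : Tendsto (fun m : ℕ => (m + 1) / 2) atTop atTop :=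
      tendsto_atTop_mono (fun m => Nat.div_le_div_right (Nat.le_succ m))
        (Nat.tendsto_div_const_atTop (by norm_num))
    simpa using (hlim.comp ht).div_const 3

lemma mid_AP {x : ℝ} (h : ∀ n, FF^[n] x ∈ Set.Ioo (1 / 3 : ℝ) (2 / 3)) : AP x := by
  have hstep : ∀ n, FF^[2 * (n + 1)] x = FF (FF (FF^[2 * n] x)) := fun n => by
    rw [show 2 * (n + 1) = 2 * n + 1 + 1 from rfl, Function.iterate_succ_apply',
      Function.iterate_succ_apply']
  have hanti : ∀ m n, FF^[m] x ≤ FF^[n] x → FF (FF (FF^[m] x)) ≤ FF (FF (FF^[n] x)) := by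
    intro m n hmn
    have h1 := FF_anti (h m).1.le hmn (h n).2.le
    have hm := h (m + 1)
    have hn := h (n + 1)
    rw [Function.iterate_succ_apply'] at hm hn
    exact FF_anti hn.1.le h1 hm.2.le
  obtain ⟨a, ha⟩ : ∃ a, Tendsto (fun n => FF^[2 * n] x) atTop (𝓝 a) := by
    rcases le_total (FF^[2 * 0] x) (FF^[2 * (0 + 1)] x) with h0 | h0
    · have hmono : Monotone fun n => FF^[2 * n] x := by
        refine monotone_nat_of_le_succ fun n => ?_
        induction n with
        | zero => exact h0
        | succ n ih => rw [hstep (n + 1), hstep n]; rw [hstep n] at ih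
                       have := hanti (2 * n) (2 * (n + 1)) (by rw [hstep n]; exact ih)
                       rw [hstep n] at this; exact this
      exact ⟨_, tendsto_atTop_ciSup hmono ⟨2 / 3, by rintro _ ⟨n, rfl⟩; exact (h _).2.le⟩⟩
    · have hmono : Antitone fun n => FF^[2 * n] x := by
        refine antitone_nat_of_succ_le fun n => ?_
        induction n with
        | zero => exact h0
        | succ n ih => rw [hstep (n + 1), hstep n]; rw [hstep n] at ih
                       have := hanti (2 * (n + 1)) (2 * n) (by rw [hstep n]; exact ih)
                       rw [hstep n] at this; exact this
      exact ⟨_, tendsto_atTop_ciInf hmono ⟨1 / 3, by rintro _ ⟨n, rfl⟩; exact (h _).1.le⟩⟩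
  have hodd : Tendsto (fun n => FF (FF^[2 * n] x)) atTop (𝓝 (FF a)) :=
    (FF_cont.tendsto a).comp ha
  have heven : Tendsto (fun n => FF (FF (FF^[2 * n] x))) atTop (𝓝 (FF (FF a))) :=
    (FF_cont.tendsto _).comp hodd
  have hper : FF (FF a) = a := by
    refine tendsto_nhds_unique heven ?_
    have := (tendsto_add_atTop_iff_nat 1).2 ha
    simpa only [hstep] using this
  have hper2 : ∀ k, FF^[2 * k] a = a := periodic_mul (p := 2) hper
  refine ⟨a, ?_, 2, by norm_num, hper, ?_⟩
  · refine isClosed_Icc.mem_of_tendsto ha (Eventually.of_forall fun n => ?_)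
    have := h (2 * n)
    exact ⟨by linarith [this.1], by linarith [this.2]⟩
  · rw [Metric.tendsto_atTop] at ha hodd ⊢
    intro ε hε
    obtain ⟨N1, h1⟩ := ha ε hε
    obtain ⟨N2, h2⟩ := hodd ε hε
    refine ⟨2 * N1 + 2 * N2, fun n hn => ?_⟩
    rw [Real.dist_eq, sub_zero, abs_abs]
    rcases Nat.even_or_odd' n with ⟨k, rfl | rfl⟩
    · rw [hper2]; exact h1 k (by omega)
    · rw [Function.iterate_succ_apply', Function.iterate_succ_apply', hper2]
      exact h2 k (by omega)

lemma AP_or_enter (L : ℕ) : ∀ x ∈ Set.Icc (0 : ℝ) 1, AP x ∨ ∃ t, FF^[t] x ∈ preCantorSet L := by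
  induction L with
  | zero => intro x hx; exact Or.inr ⟨0, hx⟩
  | succ L ih =>
    have main : ∀ v ∈ Set.Icc (0 : ℝ) 1, AP (v / 3) ∨ ∃ t, FF^[t] (v / 3) ∈ preCantorSet (L + 1) := by
      intro v hv
      rcases ih v hv with h | ⟨t, ht⟩
      · exact Or.inl (AP_low hv h)
      · exact Or.inr ⟨2 * t, by rw [iter_even hv]; exact preC_low ht⟩
    have main2 : ∀ x ∈ Set.Icc (0 : ℝ) 1, (∃ s, FF^[s] x ∈ Set.Icc (0 : ℝ) (1 / 3)) →
        AP x ∨ ∃ t, FF^[t] x ∈ preCantorSet (L + 1) := by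
      rintro x hx ⟨s, hs⟩
      rcases main (3 * FF^[s] x) ⟨by linarith [hs.1], by linarith [hs.2]⟩ with h | ⟨t, ht⟩
      · rw [mul_div_cancel_left₀ _ (by norm_num : (3 : ℝ) ≠ 0)] at h
        exact Or.inl (AP_shift h)
      · rw [mul_div_cancel_left₀ _ (by norm_num : (3 : ℝ) ≠ 0), ← Function.iterate_add_apply] at ht
        exact Or.inr ⟨_, ht⟩
    intro x hx
    by_cases hmid : ∀ n, FF^[n] x ∈ Set.Ioo (1 / 3 : ℝ) (2 / 3)
    · exact Or.inl (mid_AP hmid)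
    push Not at hmid
    obtain ⟨n, hn⟩ := hmid
    have hI := iter_mem hx n
    apply main2 x hx
    rcases le_or_gt (FF^[n] x) (1 / 3) with h1 | h1
    · exact ⟨n, hI.1, h1⟩
    · have h2 : 2 / 3 ≤ FF^[n] x := by
        by_contra h; exact hn ⟨h1, not_le.1 h⟩
      refine ⟨n + 1, ?_⟩
      rw [Function.iterate_succ_apply', FF_high h2 hI.2]
      exact ⟨by linarith, by linarith [hI.2]⟩

lemma AP_or_EvC {x : ℝ} (hx : x ∈ Set.Icc (0 : ℝ) 1) : AP x ∨ EvC x := by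
  by_cases h : AP x
  · exact Or.inl h
  · exact Or.inr fun L => (AP_or_enter L x hx).resolve_left h

lemma EvC_late {x : ℝ} (h : EvC x) (L N : ℕ) : ∃ t ≥ N, FF^[t] x ∈ preCantorSet L := by
  obtain ⟨t, ht⟩ := h L
  refine ⟨N + t, Nat.le_add_right _ _, ?_⟩
  rw [Function.iterate_add_apply]
  exact preC_iter ht N

lemma EvC_late' {x : ℝ} (h : EvC x) (L : ℕ) : ∃ t, ∀ n ≥ t, FF^[n] x ∈ preCantorSet L := by
  obtain ⟨t, ht⟩ := h L
  refine ⟨t, fun n hn => ?_⟩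
  obtain ⟨k, rfl⟩ := Nat.exists_eq_add_of_le' hn
  rw [Function.iterate_add_apply]
  exact preC_iter ht k

lemma exists_third_lt {ε : ℝ} (hε : 0 < ε) : ∃ L : ℕ, (1 / 3 : ℝ) ^ L < ε :=
  exists_pow_lt_of_lt_one hε (by norm_num)

lemma EvC_of_cantor {x : ℝ} (h : x ∈ cantorSet) : EvC x :=
  fun L => ⟨0, Set.mem_iInter.1 h L⟩

lemma cantor_iff {x : ℝ} : x ∈ cantorSet ↔ ∀ L, x ∈ preCantorSet L := Set.mem_iInter

lemma EvC_dense {x w ε : ℝ} (h : EvC x) (hw : w ∈ cantorSet) (hε : 0 < ε) (N : ℕ) :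
    ∃ n ≥ N, |FF^[n] x - w| < ε := by
  obtain ⟨L, hL⟩ := exists_third_lt hε
  obtain ⟨t, htN, ht⟩ := EvC_late h L N
  obtain ⟨n, hn⟩ := preC_dense L _ ht w (cantor_iff.1 hw L)
  refine ⟨n + t, by omega, ?_⟩
  rw [Function.iterate_add_apply]
  linarith

lemma cantor_infinite : cantorSet.Infinite := by
  rw [← Set.infinite_coe_iff]
  exact Infinite.of_injective _ cantorSetHomeomorphNatToBool.symm.injective

lemma orbit_finite {z : ℝ} {p : ℕ} (hp : 0 < p) (h : FF^[p] z = z) :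
    (Set.range fun n => FF^[n] z).Finite := by
  refine ((Finset.range p).finite_toSet.image fun n => FF^[n] z).subset ?_
  rintro _ ⟨n, rfl⟩
  refine ⟨n % p, by simpa using Nat.mod_lt n hp, ?_⟩
  exact Function.IsPeriodicPt.iterate_mod_apply (f := FF) (x := z) h n

lemma per_not_cantor {z : ℝ} {p : ℕ} (hp : 0 < p) (h : FF^[p] z = z) : z ∉ cantorSet := by
  intro hz
  refine cantor_infinite ((orbit_finite hp h).subset ?_)
  intro w hw
  rw [← (orbit_finite hp h).isClosed.closure_eq, Metric.mem_closure_iff]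
  intro ε hε
  obtain ⟨n, -, hn⟩ := EvC_dense (EvC_of_cantor hz) hw hε 0
  exact ⟨_, ⟨n, rfl⟩, by rw [dist_comm]; exact hn⟩

lemma not_prox_AP_EvC {x y : ℝ} (hx : AP x) (hy : EvC y)
    (h : ∀ ε > 0, ∃ᶠ n in atTop, |FF^[n] x - FF^[n] y| < ε) : False := by
  obtain ⟨z, hz, p, hp, hper, hlim⟩ := hx
  refine per_not_cantor hp hper (cantor_iff.2 fun L => ?_)
  by_contra hzL
  have hdisj : Disjoint (Set.range fun n => FF^[n] z) (preCantorSet L) := by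
    rw [Set.disjoint_left]
    rintro _ ⟨n, rfl⟩ hn
    apply hzL
    have := preC_iter hn (p * n - n)
    rw [← Function.iterate_add_apply, Nat.sub_add_cancel (Nat.le_mul_of_pos_left n hp),
      periodic_mul hper] at this
    exact this
  obtain ⟨r, hr, hd⟩ := Metric.exists_pos_forall_lt_edist (orbit_finite hp hper).isCompact
    (isClosed_preCantorSet L) hdisj
  obtain ⟨t, ht⟩ := EvC_late' hy L
  have hr' : (0 : ℝ) < r := hr
  have h1 : ∀ᶠ n in atTop, |FF^[n] x - FF^[n] z| < r / 2 :=
    hlim.eventually (gt_mem_nhds (by positivity))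
  obtain ⟨n, hn, hn1, hn2⟩ := ((h (r / 2) (by positivity)).and_eventually
    (h1.and (eventually_ge_atTop t))).exists
  have h3 := hd _ ⟨n, rfl⟩ _ (ht n hn2)
  rw [edist_dist, ENNReal.coe_nnreal_eq, ENNReal.ofReal_lt_ofReal_iff_of_nonneg hr'.le,
    Real.dist_eq] at h3
  have := abs_sub_le (FF^[n] z) (FF^[n] x) (FF^[n] y)
  rw [abs_sub_comm (FF^[n] z) (FF^[n] x)] at this
  simp only at h3
  linarith

lemma prox_AP_AP {x y : ℝ} (hx : AP x) (hy : AP y)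
    (h : ∀ ε > 0, ∃ᶠ n in atTop, |FF^[n] x - FF^[n] y| < ε) :
    Tendsto (fun n => |FF^[n] x - FF^[n] y|) atTop (𝓝 0) := by
  obtain ⟨z, hz, p, hp, hper, hlim⟩ := hx
  obtain ⟨w, hw, q, hq, hper', hlim'⟩ := hy
  have hcoin : ∃ n, FF^[n] z = FF^[n] w := by
    by_contra hne
    push Not at hne
    have hfin : (Set.range fun n => |FF^[n] z - FF^[n] w|).Finite := by
      refine (((orbit_finite hp hper).prod (orbit_finite hq hper')).image
        fun a => |a.1 - a.2|).subset ?_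
      rintro _ ⟨n, rfl⟩
      exact ⟨(_, _), ⟨⟨n, rfl⟩, ⟨n, rfl⟩⟩, rfl⟩
    obtain ⟨_, ⟨m, rfl⟩, hm⟩ := Set.exists_min_image _ id hfin ⟨_, ⟨0, rfl⟩⟩
    have hpos : 0 < |FF^[m] z - FF^[m] w| := abs_pos.2 (sub_ne_zero.2 (hne m))
    set d := |FF^[m] z - FF^[m] w| with hd
    have h1 : ∀ᶠ n in atTop, |FF^[n] x - FF^[n] z| < d / 3 :=
      hlim.eventually (gt_mem_nhds (by positivity))
    have h2 : ∀ᶠ n in atTop, |FF^[n] y - FF^[n] w| < d / 3 :=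
      hlim'.eventually (gt_mem_nhds (by positivity))
    obtain ⟨n, hn, hn1, hn2⟩ := ((h (d / 3) (by positivity)).and_eventually (h1.and h2)).exists
    have h3 : d ≤ |FF^[n] z - FF^[n] w| := hm _ ⟨n, rfl⟩
    have h4 := abs_sub_le (FF^[n] z) (FF^[n] x) (FF^[n] w)
    have h5 := abs_sub_le (FF^[n] x) (FF^[n] y) (FF^[n] w)
    rw [abs_sub_comm (FF^[n] z) (FF^[n] x)] at h4
    linarith
  obtain ⟨N, hN⟩ := hcoin
  have hsum := hlim.add hlim'
  rw [add_zero] at hsum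
  refine squeeze_zero' (Eventually.of_forall fun n => abs_nonneg _) ?_ hsum
  filter_upwards [eventually_ge_atTop N] with n hn
  have heq : FF^[n] z = FF^[n] w := by
    obtain ⟨k, rfl⟩ := Nat.exists_eq_add_of_le' hn
    rw [Function.iterate_add_apply, Function.iterate_add_apply, hN]
  have h4 := abs_sub_le (FF^[n] x) (FF^[n] z) (FF^[n] y)
  rw [heq, abs_sub_comm (FF^[n] w) (FF^[n] y)] at h4
  rw [heq]
  exact h4

lemma prox_EvC_EvC {x y : ℝ} (hx : EvC x) (hy : EvC y)
    (h : ∀ ε > 0, ∃ᶠ n in atTop, |FF^[n] x - FF^[n] y| < ε) :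
    Tendsto (fun n => |FF^[n] x - FF^[n] y|) atTop (𝓝 0) := by
  rw [Metric.tendsto_atTop]
  intro ε hε
  obtain ⟨L, hL⟩ := exists_third_lt hε
  obtain ⟨t, ht⟩ := EvC_late' hx L
  obtain ⟨s, hs⟩ := EvC_late' hy L
  have hshift : ∀ n ≥ t + s, ∀ u, FF^[n] u = FF^[n - (t + s)] (FF^[t + s] u) := by
    intro n hn u
    rw [← Function.iterate_add_apply, Nat.sub_add_cancel hn]
  rcases preC_dich L _ (ht (t + s) (by omega)) _ (hs (t + s) (by omega)) with h1 | h1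
  · refine ⟨t + s, fun n hn => ?_⟩
    rw [Real.dist_eq, sub_zero, abs_abs, hshift n hn, hshift n hn]
    linarith [h1 (n - (t + s))]
  · exfalso
    obtain ⟨n, hn, hn1⟩ := ((h _ (by positivity : (0 : ℝ) < (1 / 3) ^ L)).and_eventually
      (eventually_ge_atTop (t + s))).exists
    rw [hshift n hn1, hshift n hn1] at hn
    linarith [h1 (n - (t + s))]

lemma prox_tendsto {x y : ℝ} (hx : x ∈ Set.Icc (0 : ℝ) 1) (hy : y ∈ Set.Icc (0 : ℝ) 1)
    (h : ∀ ε > 0, ∃ᶠ n in atTop, |FF^[n] x - FF^[n] y| < ε) :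
    Tendsto (fun n => |FF^[n] x - FF^[n] y|) atTop (𝓝 0) := by
  rcases AP_or_EvC hx with h1 | h1 <;> rcases AP_or_EvC hy with h2 | h2
  · exact prox_AP_AP h1 h2 h
  · exact (not_prox_AP_EvC h1 h2 h).elim
  · refine (not_prox_AP_EvC h2 h1 fun ε hε => ?_).elim
    simpa only [abs_sub_comm] using h ε hε
  · exact prox_EvC_EvC h1 h2 h

/-! ### Entropy -/

/-- `A` can be coloured by `N` colours so that points of the same colour have `ε`-close orbits
for `n` steps. -/
def Cov (A : Set ℝ) (n : ℕ) (ε : ℝ) (N : ℕ) : Prop :=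
  ∃ c : ℝ → Fin N, ∀ x ∈ A, ∀ y ∈ A, c x = c y → ∀ j < n, |FF^[j] x - FF^[j] y| ≤ ε

lemma Cov.of_fintype {A : Set ℝ} {n : ℕ} {ε : ℝ} {ι : Type} [Fintype ι] (c : ℝ → ι)
    (h : ∀ x ∈ A, ∀ y ∈ A, c x = c y → ∀ j < n, |FF^[j] x - FF^[j] y| ≤ ε) :
    Cov A n ε (Fintype.card ι) :=
  ⟨fun x => Fintype.equivFin ι (c x), fun x hx y hy hxy =>
    h x hx y hy ((Fintype.equivFin ι).injective hxy)⟩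

lemma Cov_one (n : ℕ) : Cov (Set.Icc 0 1) n 1 1 := by
  refine ⟨fun _ => 0, fun x hx y hy _ j _ => ?_⟩
  have h1 := iter_mem hx j
  have h2 := iter_mem hy j
  rw [abs_le]
  constructor <;> linarith [h1.1, h1.2, h2.1, h2.2]

lemma Cov_pre {n N : ℕ} {ε : ℝ} (h : Cov (Set.Icc 0 1) n ε N) :
    Cov (preCantorSet 1) n (ε / 3) (2 * N) := by
  obtain ⟨c, hc⟩ := h
  have := Cov.of_fintype (A := preCantorSet 1) (n := n) (ε := ε / 3)
    (fun x => (decide (x ≤ 1 / 3), if x ≤ 1 / 3 then c (3 * x) else c (3 * x - 2))) ?_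
  · simpa using this
  intro x hx y hy hxy j hj
  simp only [Prod.mk.injEq, decide_eq_decide] at hxy
  have haux : ∀ v ∈ preCantorSet 0, ¬ ((2 + v) / 3 ≤ 1 / 3) := fun v hv => by
    linarith [hv.1]
  have haux' : ∀ v ∈ preCantorSet 0, v / 3 ≤ 1 / 3 := fun v hv => by
    linarith [hv.2]
  obtain ⟨v, hv, rfl | rfl⟩ := preC_cases hx <;> obtain ⟨w, hw, rfl | rfl⟩ := preC_cases hy
  · rw [if_pos (haux' v hv), if_pos (haux' w hw)] at hxy
    have hcc : c v = c w := by
      have := hxy.2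
      rwa [mul_div_cancel₀ v (by norm_num : (3 : ℝ) ≠ 0),
        mul_div_cancel₀ w (by norm_num : (3 : ℝ) ≠ 0)] at this
    rw [dist_low (preC_I hv) (preC_I hw)]
    linarith [hc v hv w hw hcc ((j + 1) / 2) (by omega)]
  · exact (haux w hw (hxy.1.1 (haux' v hv))).elim
  · exact (haux v hv (hxy.1.2 (haux' w hw))).elim
  · rw [if_neg (haux v hv), if_neg (haux w hw)] at hxy
    have hcc : c v = c w := by
      have := hxy.2
      rwa [mul_div_cancel₀ _ (by norm_num : (3 : ℝ) ≠ 0),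
        mul_div_cancel₀ _ (by norm_num : (3 : ℝ) ≠ 0), add_sub_cancel_left,
        add_sub_cancel_left] at this
    rw [dist_high (preC_I hv) (preC_I hw)]
    linarith [hc v hv w hw hcc (j / 2) (by omega)]

/-- Orientation-corrected cell number of the `j`-th iterate. -/
def cell (k j : ℕ) (x : ℝ) : ℕ :=
  if Even j then ⌊FF^[j] x * k⌋₊ else k - ⌊FF^[j] x * k⌋₊

lemma floor_le_k {k : ℕ} {u : ℝ} (hu : u ∈ Set.Icc (0 : ℝ) 1) : ⌊u * k⌋₊ ≤ k := by
  have h : u * k ≤ k := by nlinarith [hu.2, (Nat.cast_nonneg k : (0 : ℝ) ≤ k)]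
  exact (Nat.floor_le_floor h).trans (Nat.floor_natCast k).le

lemma cell_le {k j : ℕ} {x : ℝ} (hx : x ∈ Set.Icc (0 : ℝ) 1) : cell k j x ≤ k := by
  unfold cell
  split_ifs
  · exact floor_le_k (iter_mem hx j)
  · exact Nat.sub_le _ _

lemma cell_eq {k j : ℕ} (hk : 0 < k) {x y : ℝ} (hx : x ∈ Set.Icc (0 : ℝ) 1)
    (hy : y ∈ Set.Icc (0 : ℝ) 1) (h : cell k j x = cell k j y) :
    |FF^[j] x - FF^[j] y| ≤ 1 / k := by
  have hx' := iter_mem hx j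
  have hy' := iter_mem hy j
  have h1 := floor_le_k (k := k) hx'
  have h2 := floor_le_k (k := k) hy'
  have hfl : ⌊FF^[j] x * k⌋₊ = ⌊FF^[j] y * k⌋₊ := by
    unfold cell at h
    split_ifs at h
    · exact h
    · omega
  have hk' : (0 : ℝ) < k := by exact_mod_cast hk
  have a1 := Nat.floor_le (mul_nonneg hx'.1 hk'.le)
  have a2 := Nat.lt_floor_add_one (FF^[j] x * k)
  have b1 := Nat.floor_le (mul_nonneg hy'.1 hk'.le)
  have b2 := Nat.lt_floor_add_one (FF^[j] y * k)
  rw [hfl] at a1 a2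
  rw [le_div_iff₀ hk', ← abs_of_pos hk', ← abs_mul, abs_le]
  constructor <;> nlinarith

lemma iter_mid_mono {x y : ℝ} (hxy : x ≤ y) {t : ℕ}
    (hx : ∀ j < t, FF^[j] x ∈ Set.Ioo (1 / 3 : ℝ) (2 / 3))
    (hy : ∀ j < t, FF^[j] y ∈ Set.Ioo (1 / 3 : ℝ) (2 / 3)) :
    ∀ j ≤ t, if Even j then FF^[j] x ≤ FF^[j] y else FF^[j] y ≤ FF^[j] x := by
  intro j hj
  induction j with
  | zero => simpa using hxy
  | succ j ih =>
    have h1 := hx j (by omega)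
    have h2 := hy j (by omega)
    have := ih (by omega)
    rw [Function.iterate_succ_apply', Function.iterate_succ_apply']
    by_cases he : Even j
    · rw [if_pos he] at this
      rw [if_neg (by simpa [Nat.even_add_one] using he)]
      exact FF_anti h1.1.le this h2.2.le
    · rw [if_neg he] at this
      rw [if_pos (by simpa [Nat.even_add_one] using he)]
      exact FF_anti h2.1.le this h1.2.le

lemma cell_mono {x y : ℝ} (hxy : x ≤ y) {t k : ℕ}
    (hx : ∀ j < t, FF^[j] x ∈ Set.Ioo (1 / 3 : ℝ) (2 / 3))
    (hy : ∀ j < t, FF^[j] y ∈ Set.Ioo (1 / 3 : ℝ) (2 / 3)) :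
    ∀ j < t, cell k j x ≤ cell k j y := by
  intro j hj
  have := iter_mid_mono hxy hx hy j hj.le
  have hk : (0 : ℝ) ≤ k := Nat.cast_nonneg k
  unfold cell
  split_ifs at this ⊢
  · exact Nat.floor_le_floor (mul_le_mul_of_nonneg_right this hk)
  · exact Nat.sub_le_sub_left (Nat.floor_le_floor (mul_le_mul_of_nonneg_right this hk)) _

lemma cell_close {x y : ℝ} (hxI : x ∈ Set.Icc (0 : ℝ) 1) (hyI : y ∈ Set.Icc (0 : ℝ) 1)
    {t k : ℕ} (hk : 0 < k)
    (hx : ∀ j < t, FF^[j] x ∈ Set.Ioo (1 / 3 : ℝ) (2 / 3))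
    (hy : ∀ j < t, FF^[j] y ∈ Set.Ioo (1 / 3 : ℝ) (2 / 3))
    (hs : ∑ j ∈ Finset.range t, cell k j x = ∑ j ∈ Finset.range t, cell k j y) :
    ∀ j < t, |FF^[j] x - FF^[j] y| ≤ 1 / k := by
  intro j hj
  apply cell_eq hk hxI hyI
  rcases le_total x y with h | h
  · exact (Finset.sum_eq_sum_iff_of_le fun i hi =>
      cell_mono h hx hy i (Finset.mem_range.1 hi)).1 hs j (Finset.mem_range.2 hj)
  · exact ((Finset.sum_eq_sum_iff_of_le fun i hi =>
      cell_mono h hy hx i (Finset.mem_range.1 hi)).1 hs.symm j (Finset.mem_range.2 hj)).symm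

lemma exit_time (n : ℕ) {x : ℝ} (hx : x ∈ Set.Icc (0 : ℝ) 1) :
    ∃ t ≤ n, (∀ j < t, FF^[j] x ∈ Set.Ioo (1 / 3 : ℝ) (2 / 3)) ∧
      (t < n → FF^[t] x ∈ preCantorSet 1) := by
  classical
  induction n with
  | zero => exact ⟨0, le_rfl, by simp, by simp⟩
  | succ n ih =>
    obtain ⟨t, htn, h1, h2⟩ := ih
    rcases htn.lt_or_eq with h | rfl
    · exact ⟨t, by omega, h1, fun _ => h2 h⟩
    by_cases hm : FF^[t] x ∈ Set.Ioo (1 / 3 : ℝ) (2 / 3)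
    · refine ⟨t + 1, le_rfl, fun j hj => ?_, fun h => absurd h (lt_irrefl _)⟩
      rcases Nat.lt_succ_iff_lt_or_eq.1 hj with h | rfl
      · exact h1 j h
      · exact hm
    · refine ⟨t, by omega, h1, fun _ => ?_⟩
      have hI := iter_mem hx t
      rcases le_or_gt (FF^[t] x) (1 / 3) with h3 | h3
      · exact Or.inl ⟨3 * FF^[t] x, ⟨by linarith [hI.1], by linarith⟩, by simp⟩
      · have h4 : 2 / 3 ≤ FF^[t] x := by
          by_contra h; exact hm ⟨h3, not_le.1 h⟩
        exact Or.inr ⟨3 * FF^[t] x - 2, ⟨by linarith, by linarith [hI.2]⟩, by simp⟩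

lemma Cov_step {n N k : ℕ} {δ : ℝ} (hk : 0 < k) (hδ : 1 / (k : ℝ) ≤ δ)
    (h : Cov (preCantorSet 1) n δ N) :
    Cov (Set.Icc 0 1) n δ ((n + 1) * ((n * k + 1) * N)) := by
  obtain ⟨c, hc⟩ := h
  have hex : ∀ x : ℝ, ∃ t ≤ n, x ∈ Set.Icc (0 : ℝ) 1 →
      (∀ j < t, FF^[j] x ∈ Set.Ioo (1 / 3 : ℝ) (2 / 3)) ∧
      (t < n → FF^[t] x ∈ preCantorSet 1) := by
    intro x
    by_cases hx : x ∈ Set.Icc (0 : ℝ) 1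
    · obtain ⟨t, h1, h2⟩ := exit_time n hx
      exact ⟨t, h1, fun _ => h2⟩
    · exact ⟨0, Nat.zero_le _, fun h => absurd h hx⟩
  choose τ hτn hτ using hex
  have := Cov.of_fintype (A := Set.Icc 0 1) (n := n) (ε := δ)
    (fun x => ((⟨τ x, Nat.lt_succ_of_le (hτn x)⟩ : Fin (n + 1)),
      (⟨min (n * k) (∑ j ∈ Finset.range (τ x), cell k j x),
        Nat.lt_succ_of_le (min_le_left _ _)⟩ : Fin (n * k + 1)), c (FF^[τ x] x))) ?_
  · simpa using this
  intro x hx y hy hxy j hj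
  simp only [Prod.mk.injEq, Fin.mk.injEq] at hxy
  obtain ⟨e1, e2, e3⟩ := hxy
  obtain ⟨x1, x2⟩ := hτ x hx
  obtain ⟨y1, y2⟩ := hτ y hy
  have hbound : ∀ z ∈ Set.Icc (0 : ℝ) 1, ∑ j ∈ Finset.range (τ z), cell k j z ≤ n * k := by
    intro z hz
    calc ∑ j ∈ Finset.range (τ z), cell k j z ≤ ∑ j ∈ Finset.range (τ z), k :=
          Finset.sum_le_sum fun i _ => cell_le hz
      _ = τ z * k := by simp
      _ ≤ n * k := Nat.mul_le_mul_right k (hτn z)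
  rw [min_eq_right (hbound x hx), min_eq_right (hbound y hy)] at e2
  rw [← e1] at y1 y2 e2 e3
  rcases lt_or_ge j (τ x) with hjt | hjt
  · exact (cell_close hx hy hk x1 y1 e2 j hjt).trans hδ
  · have hlt : τ x < n := lt_of_le_of_lt hjt hj
    have := hc _ (x2 hlt) _ (y2 hlt) e3 (j - τ x) (by omega)
    rwa [← Function.iterate_add_apply, ← Function.iterate_add_apply, Nat.sub_add_cancel hjt] at this

lemma Cov_final (n k : ℕ) (L : ℕ) (hk : 3 ^ L ≤ k) :
    Cov (Set.Icc 0 1) n ((1 / 3 : ℝ) ^ L) ((2 * ((n + 1) * (n * k + 1))) ^ L) := by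
  induction L with
  | zero => simpa using Cov_one n
  | succ L ih =>
    have hk0 : 0 < k := lt_of_lt_of_le (by positivity) hk
    have h := Cov_step hk0 (δ := (1 / 3 : ℝ) ^ L / 3) ?_
      (Cov_pre (ih ((Nat.pow_le_pow_right (by norm_num) (Nat.le_succ L)).trans hk)))
    · convert h using 1 <;> ring
    · have h3 : ((3 : ℝ) ^ (L + 1)) ≤ k := by exact_mod_cast hk
      calc 1 / (k : ℝ) ≤ 1 / (3 : ℝ) ^ (L + 1) := one_div_le_one_div_of_le (by positivity) h3
        _ = (1 / 3 : ℝ) ^ L / 3 := by rw [pow_succ, one_div_pow]; field_simp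

/-! ### Transfer to the unit interval -/

/-- The map on the unit interval. -/
def fUI (x : UI) : UI := ⟨FF x, FF_mem x.2⟩

lemma fUI_cont : Continuous fUI := by
  unfold fUI
  exact Continuous.subtype_mk (FF_cont.comp continuous_subtype_val) _

lemma fUI_iter (n : ℕ) (x : UI) : ((fUI^[n] x : UI) : ℝ) = FF^[n] x := by
  induction n with
  | zero => rfl
  | succ n ih => rw [Function.iterate_succ_apply', Function.iterate_succ_apply', ← ih]; rfl

lemma trajN_fUI (n : ℕ) : trajN (fun _ => fUI) n = fUI^[n] := by
  induction n with
  | zero => rfl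
  | succ n ih => rw [Function.iterate_succ', ← ih]; rfl

lemma dist_trajN (n : ℕ) (x y : UI) :
    dist (trajN (fun _ => fUI) n x) (trajN (fun _ => fUI) n y) = |FF^[n] x - FF^[n] y| := by
  rw [trajN_fUI, Subtype.dist_eq, fUI_iter, fUI_iter, Real.dist_eq]

lemma fUI_surj : Function.Surjective fUI := by
  intro y
  have h := intermediate_value_Icc' (by norm_num : (0 : ℝ) ≤ 2 / 3) FF_cont.continuousOn
  rw [FF_zero, FF_high le_rfl (by norm_num), sub_self] at h
  obtain ⟨x, hx, hxy⟩ := h y.2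
  exact ⟨⟨x, hx.1, by linarith [hx.2]⟩, Subtype.ext hxy⟩

lemma fUI_notLY : ¬ LiYorkeChaotic (fun _ => fUI) := by
  rintro ⟨S, hS, hpair⟩
  have hnt : S.Nontrivial := by
    by_contra h
    exact hS (Set.not_nontrivial_iff.1 h).finite.countable
  obtain ⟨x, hx, y, hy, hne⟩ := hnt
  obtain ⟨h1, h2⟩ := hpair x hx y hy hne
  simp only [dist_trajN] at h1 h2
  have hbdd : ∀ n, |FF^[n] (x : ℝ) - FF^[n] (y : ℝ)| ≤ 1 := by
    intro n
    have h1 := iter_mem x.2 n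
    have h2 := iter_mem y.2 n
    rw [abs_le]
    constructor <;> linarith [h1.1, h1.2, h2.1, h2.2]
  have hprox : ∀ ε > 0, ∃ᶠ n in atTop, |FF^[n] (x : ℝ) - FF^[n] (y : ℝ)| < ε := by
    intro ε hε
    refine frequently_lt_of_liminf_lt ?_ (by rw [h2]; exact hε)
    exact (isBoundedUnder_of ⟨1, hbdd⟩ : IsBoundedUnder (· ≤ ·) atTop _).isCoboundedUnder_ge
  rw [(prox_tendsto x.2 y.2 hprox).limsup_eq] at h1
  exact lt_irrefl _ h1

lemma sepNumT_le {n L k : ℕ} {ε : ℝ} (hL : (1 / 3 : ℝ) ^ L ≤ ε) (hk : 3 ^ L ≤ k) :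
    sepNumT (fun _ => fUI) n ε ≤ (2 * ((n + 1) * (n * k + 1))) ^ L := by
  obtain ⟨c, hc⟩ := Cov_final n k L hk
  unfold sepNumT
  refine csSup_le' ?_
  rintro m ⟨E, rfl, hE⟩
  have hinj : Set.InjOn (fun x : UI => c x) E := by
    intro x hx y hy hxy
    by_contra hne
    obtain ⟨j, hj, hd⟩ := hE x hx y hy hne
    rw [dist_trajN] at hd
    linarith [hc x x.2 y y.2 hxy j hj]
  calc E.card = (E.image fun x : UI => c x).card := (Finset.card_image_of_injOn hinj).symm
    _ ≤ Fintype.card (Fin ((2 * ((n + 1) * (n * k + 1))) ^ L)) := Finset.card_le_univ _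
    _ = _ := Fintype.card_fin _

lemma log_bound_tendsto (L k : ℕ) (hk : 0 < k) :
    Tendsto (fun n : ℕ => (L * (Real.log (8 * k) + 2 * Real.log n) / n : ℝ)) atTop (𝓝 0) := by
  have h1 : Tendsto (fun n : ℕ => Real.log n / n) atTop (𝓝 0) := by
    have := (Real.tendsto_pow_log_div_mul_add_atTop 1 0 1 one_ne_zero).comp
      (tendsto_natCast_atTop_atTop (R := ℝ))
    simpa [Function.comp_def] using this
  have h2 : Tendsto (fun n : ℕ => (L * Real.log (8 * k) : ℝ) / n) atTop (𝓝 0) :=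
    tendsto_const_div_atTop_nhds_zero_nat _
  have h3 := h2.add (h1.const_mul (2 * L : ℝ))
  rw [mul_zero, add_zero] at h3
  refine h3.congr fun n => ?_
  ring

lemma fUI_entropy : topEntropyNDS (fun _ => fUI) = 0 := by
  unfold topEntropyNDS
  refine le_antisymm ?_ ?_
  · refine iSup₂_le fun ε hε => ?_
    obtain ⟨L, hL⟩ := exists_third_lt hε
    have hlim := log_bound_tendsto L (3 ^ L) (by positivity)
    have hlim' : Tendsto (fun n : ℕ => ((L * (Real.log (8 * (3 ^ L : ℕ)) + 2 * Real.log n) / n : ℝ)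
        : EReal)) atTop (𝓝 0) := (continuous_coe_real_ereal.tendsto 0).comp hlim
    rw [← hlim'.limsup_eq]
    refine limsup_le_limsup ?_
    filter_upwards [eventually_ge_atTop 1] with n hn
    rw [EReal.coe_le_coe_iff]
    have hn' : (1 : ℝ) ≤ n := by exact_mod_cast hn
    refine div_le_div_of_nonneg_right ?_ (by linarith)
    have hb := sepNumT_le (n := n) hL.le (le_refl (3 ^ L))
    set K := 3 ^ L with hK
    have hK1 : 1 ≤ K := Nat.one_le_pow _ _ (by norm_num)
    have hb2 : sepNumT (fun _ => fUI) n ε ≤ (8 * K * n ^ 2) ^ L := by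
      refine hb.trans (Nat.pow_le_pow_left ?_ L)
      have e1 : n + 1 ≤ 2 * n := by omega
      have e2 : n * K + 1 ≤ 2 * (n * K) := by nlinarith
      calc 2 * ((n + 1) * (n * K + 1)) ≤ 2 * ((2 * n) * (2 * (n * K))) :=
            Nat.mul_le_mul_left 2 (Nat.mul_le_mul e1 e2)
        _ = 8 * K * n ^ 2 := by ring
    have hKr : (0 : ℝ) < K := by exact_mod_cast hK1
    have hval : Real.log (((8 * K * n ^ 2) ^ L : ℕ) : ℝ) =
        L * (Real.log (8 * K) + 2 * Real.log n) := by
      push_cast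
      rw [Real.log_pow, Real.log_mul (by positivity) (by positivity), Real.log_pow]
      norm_num
    rw [← hval]
    rcases Nat.eq_zero_or_pos (sepNumT (fun _ => fUI) n ε) with h0 | h0
    · rw [h0, Nat.cast_zero, Real.log_zero]
      exact Real.log_natCast_nonneg _
    · exact Real.log_le_log (by exact_mod_cast h0) (by exact_mod_cast hb2)
  · refine le_iSup₂_of_le (1 : ℝ) (by simp) ?_
    have h0 : Tendsto (fun _ : ℕ => (0 : EReal)) atTop (𝓝 0) := tendsto_const_nhds
    rw [← h0.limsup_eq]
    refine limsup_le_limsup (Eventually.of_forall fun n => ?_)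
    exact EReal.coe_nonneg.2 (div_nonneg (Real.log_natCast_nonneg _) (Nat.cast_nonneg _))

/-- The Cantor set in the unit interval. -/
def cantorUI : Set UI := {x | (x : ℝ) ∈ cantorSet}

lemma mem_omega {x y : UI} : y ∈ omegaSet fUI x ↔
    ∀ ε > 0, ∃ᶠ n in atTop, |FF^[n] (x : ℝ) - y| < ε := by
  unfold omegaSet
  rw [Set.mem_ofPred_eq, mapClusterPt_iff_frequently]
  constructor
  · intro h ε hε
    refine (h _ (Metric.ball_mem_nhds y hε)).mono fun n hn => ?_
    rwa [Metric.mem_ball, Subtype.dist_eq, fUI_iter, Real.dist_eq] at hn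
  · intro h s hs
    obtain ⟨ε, hε, hsub⟩ := Metric.mem_nhds_iff.1 hs
    refine (h ε hε).mono fun n hn => hsub ?_
    rwa [Metric.mem_ball, Subtype.dist_eq, fUI_iter, Real.dist_eq]

lemma omega_EvC {x : UI} (h : EvC x) : omegaSet fUI x = cantorUI := by
  ext y
  rw [mem_omega]
  constructor
  · intro hy
    refine cantor_iff.2 fun L => ?_
    rw [← (isClosed_preCantorSet L).closure_eq, Metric.mem_closure_iff]
    intro ε hε
    obtain ⟨t, ht⟩ := EvC_late' h L
    obtain ⟨n, hn, hnt⟩ := ((hy ε hε).and_eventually (eventually_ge_atTop t)).exists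
    exact ⟨_, ht n hnt, by rw [dist_comm]; exact hn⟩
  · intro hy ε hε
    rw [frequently_atTop]
    intro N
    exact EvC_dense h hy hε N

lemma omega_AP {x : UI} (h : AP x) : (omegaSet fUI x).Finite := by
  obtain ⟨z, hz, p, hp, hper, hlim⟩ := h
  have hfin := orbit_finite hp hper
  refine (hfin.preimage (Subtype.val_injective.injOn (s := _))).subset ?_
  intro y hy
  rw [mem_omega] at hy
  rw [Set.mem_preimage, ← hfin.isClosed.closure_eq, Metric.mem_closure_iff]
  intro ε hε
  have h1 : ∀ᶠ n in atTop, |FF^[n] (x : ℝ) - FF^[n] z| < ε / 2 :=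
    hlim.eventually (gt_mem_nhds (by positivity))
  obtain ⟨n, hn, hn1⟩ := ((hy (ε / 2) (by positivity)).and_eventually h1).exists
  refine ⟨_, ⟨n, rfl⟩, ?_⟩
  rw [Real.dist_eq]
  have := abs_sub_le (y : ℝ) (FF^[n] (x : ℝ)) (FF^[n] z)
  rw [abs_sub_comm (y : ℝ) (FF^[n] (x : ℝ))] at this
  simp only at this ⊢
  linarith

/-- The Cantor set in the unit interval is homeomorphic to the real one. -/
def cantorUIHomeo : cantorUI ≃ₜ cantorSet where
  toFun x := ⟨x.1.1, x.2⟩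
  invFun x := ⟨⟨x.1, cantorSet_subset_unitInterval x.2⟩, x.2⟩
  left_inv _ := rfl
  right_inv _ := rfl
  continuous_toFun := by fun_prop
  continuous_invFun := by fun_prop

lemma cantorUI_infinite : cantorUI.Infinite := by
  rw [← Set.infinite_coe_iff]
  exact Infinite.of_injective _
    (cantorUIHomeo.trans cantorSetHomeomorphNatToBool).symm.injective

/-- Parametrization of the wandering intervals. -/
def eUI (σ t : ℝ) : ℝ := 1 / 2 + σ / (10 * (1 + t))

/-- The wandering intervals. -/
def wandG (n : ℤ) : Set UI :=
  {u | ∃ t ∈ Set.Icc ((2 : ℝ) ^ n) (3 / 2 * 2 ^ n), (u : ℝ) = eUI ((-1) ^ n) t}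

lemma sign_cases (n : ℤ) : ((-1 : ℝ) ^ n = 1) ∨ ((-1 : ℝ) ^ n = -1) := by
  rcases Int.even_or_odd n with h | h
  · exact Or.inl h.neg_one_zpow
  · exact Or.inr h.neg_one_zpow

lemma sign_abs (n : ℤ) : |(-1 : ℝ) ^ n| = 1 := by
  rcases sign_cases n with h | h <;> rw [h] <;> simp

lemma eUI_abs {n : ℤ} {t : ℝ} (ht : 0 < t) : |eUI ((-1) ^ n) t - 1 / 2| = 1 / (10 * (1 + t)) := by
  unfold eUI
  rw [add_sub_cancel_left, abs_div, sign_abs, abs_of_pos (by positivity : 0 < 10 * (1 + t))]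

lemma eUI_bd {n : ℤ} {t : ℝ} (ht : 0 < t) : 0 < eUI ((-1) ^ n) t ∧ eUI ((-1) ^ n) t < 1 := by
  have h := eUI_abs (n := n) ht
  have h2 : 1 / (10 * (1 + t)) ≤ 1 / 10 := one_div_le_one_div_of_le (by norm_num) (by linarith)
  have h3 := abs_le.1 (h.le.trans h2)
  constructor <;> linarith [h3.1, h3.2]

lemma pos_of_mem {n : ℤ} {t : ℝ} (ht : t ∈ Set.Icc ((2 : ℝ) ^ n) (3 / 2 * 2 ^ n)) : 0 < t :=
  lt_of_lt_of_le (by positivity) ht.1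

lemma wandG_image (n : ℤ) : fUI '' wandG n = wandG (n + 1) := by
  have hz : (2 : ℝ) ^ (n + 1) = 2 ^ n * 2 := zpow_add_one₀ (by norm_num) n
  have hs : (-1 : ℝ) ^ (n + 1) = -(-1) ^ n := by
    rw [zpow_add_one₀ (by norm_num)]; ring
  ext v
  constructor
  · rintro ⟨u, ⟨t, ht, hu⟩, rfl⟩
    refine ⟨2 * t, ⟨?_, ?_⟩, ?_⟩
    · rw [hz]; linarith [ht.1]
    · rw [hz]; linarith [ht.2]
    · rw [hs]
      change FF u = _
      rw [hu]
      exact FF_center (sign_abs n) (pos_of_mem ht)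
  · rintro ⟨s, hs', hv⟩
    rw [hz] at hs'
    have ht : s / 2 ∈ Set.Icc ((2 : ℝ) ^ n) (3 / 2 * 2 ^ n) :=
      ⟨by linarith [hs'.1], by linarith [hs'.2]⟩
    have hb := eUI_bd (n := n) (pos_of_mem ht)
    refine ⟨⟨eUI ((-1) ^ n) (s / 2), hb.1.le, hb.2.le⟩, ⟨s / 2, ht, rfl⟩, Subtype.ext ?_⟩
    rw [hv, hs]
    change FF _ = _
    have := FF_center (sign_abs n) (pos_of_mem ht)
    unfold eUI
    rw [this, mul_div_cancel₀ s (by norm_num : (2 : ℝ) ≠ 0)]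

lemma wandG_disj : Pairwise fun m n => Disjoint (wandG m) (wandG n) := by
  have key : ∀ m n : ℤ, m < n → Disjoint (wandG m) (wandG n) := by
    intro m n hmn
    rw [Set.disjoint_left]
    rintro u ⟨t, ht, hu⟩ ⟨s, hs, hu'⟩
    have h1 := eUI_abs (n := m) (pos_of_mem ht)
    have h2 := eUI_abs (n := n) (pos_of_mem hs)
    rw [← hu] at h1
    rw [← hu', h1, one_div, one_div, inv_inj] at h2
    have hle : (2 : ℝ) ^ (m + 1) ≤ 2 ^ n := zpow_le_zpow_right₀ (by norm_num) hmn
    rw [zpow_add_one₀ (by norm_num)] at hle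
    have hp : (0 : ℝ) < 2 ^ m := by positivity
    linarith [ht.2, hs.1]
  intro m n hmn
  rcases lt_or_gt_of_ne hmn with h | h
  · exact key m n h
  · exact (key n m h).symm

/-- Solving for the parameter. -/
lemma param_of_mem {p q y : ℝ} (hp : 0 < p) (hy1 : 1 / (10 * (1 + q)) ≤ y)
    (hpq : p < q) (hy2 : y ≤ 1 / (10 * (1 + p))) :
    ∃ t ∈ Set.Icc p q, y = 1 / (10 * (1 + t)) := by
  have hy : 0 < y := lt_of_lt_of_le (by have : 0 < q := hp.trans hpq
                                        positivity) hy1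
  refine ⟨1 / (10 * y) - 1, ⟨?_, ?_⟩, ?_⟩
  · rw [le_div_iff₀ (by linarith)] at hy2
    rw [le_sub_iff_add_le, le_div_iff₀ (by linarith)]
    linarith
  · rw [div_le_iff₀ (by linarith)] at hy1
    rw [sub_le_iff_le_add, div_le_iff₀ (by linarith)]
    linarith
  · field_simp
    ring

lemma wandG_Icc (n : ℤ) :
    ∃ a b : UI, a < b ∧ (0 : ℝ) < (a : ℝ) ∧ (b : ℝ) < 1 ∧ wandG n = Set.Icc a b := by
  set p : ℝ := 2 ^ n with hpdef
  set q : ℝ := 3 / 2 * 2 ^ n with hqdef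
  have hp : 0 < p := by positivity
  have hpq : p < q := by rw [hqdef]; linarith
  have hq : 0 < q := hp.trans hpq
  have hlt : 1 / (10 * (1 + q)) < 1 / (10 * (1 + p)) :=
    one_div_lt_one_div_of_lt (by positivity) (by linarith)
  have hbp := eUI_bd (n := n) hp
  have hbq := eUI_bd (n := n) hq
  rcases sign_cases n with hs | hs
  · refine ⟨⟨eUI ((-1) ^ n) q, hbq.1.le, hbq.2.le⟩, ⟨eUI ((-1) ^ n) p, hbp.1.le, hbp.2.le⟩,
      ?_, hbq.1, hbp.2, ?_⟩
    · rw [← Subtype.coe_lt_coe]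
      simp only [hs, eUI]
      linarith
    · ext u
      simp only [wandG, Set.mem_ofPred_eq, Set.mem_Icc, ← Subtype.coe_le_coe, hs, eUI]
      constructor
      · rintro ⟨t, ⟨h1, h2⟩, hu⟩
        rw [hu]
        have g1 : 1 / (10 * (1 + q)) ≤ 1 / (10 * (1 + t)) :=
          one_div_le_one_div_of_le (by linarith) (by linarith)
        have g2 : 1 / (10 * (1 + t)) ≤ 1 / (10 * (1 + p)) :=
          one_div_le_one_div_of_le (by linarith) (by linarith)
        constructor <;> linarith
      · rintro ⟨h1, h2⟩
        obtain ⟨t, ht, h⟩ := param_of_mem (y := (u : ℝ) - 1 / 2) hp (by linarith) hpq (by linarith)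
        exact ⟨t, ht, by linarith⟩
  · refine ⟨⟨eUI ((-1) ^ n) p, hbp.1.le, hbp.2.le⟩, ⟨eUI ((-1) ^ n) q, hbq.1.le, hbq.2.le⟩,
      ?_, hbp.1, hbq.2, ?_⟩
    · rw [← Subtype.coe_lt_coe]
      simp only [hs, eUI, neg_div]
      linarith
    · ext u
      simp only [wandG, Set.mem_ofPred_eq, Set.mem_Icc, ← Subtype.coe_le_coe, hs, eUI, neg_div]
      constructor
      · rintro ⟨t, ⟨h1, h2⟩, hu⟩
        rw [hu]
        have g1 : 1 / (10 * (1 + q)) ≤ 1 / (10 * (1 + t)) :=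
          one_div_le_one_div_of_le (by linarith) (by linarith)
        have g2 : 1 / (10 * (1 + t)) ≤ 1 / (10 * (1 + p)) :=
          one_div_le_one_div_of_le (by linarith) (by linarith)
        constructor <;> linarith
      · rintro ⟨h1, h2⟩
        obtain ⟨t, ht, h⟩ := param_of_mem (y := 1 / 2 - (u : ℝ)) hp (by linarith) hpq (by linarith)
        exact ⟨t, ht, by linarith⟩

/-- There is a surjective continuous self-map of the interval with zero topological entropy,
exactly one infinite ω-limit set — a Cantor set on which the map is minimal —, which is not
Li-Yorke chaotic, and admitting a family `{G n}_{n ∈ ℤ}` of pairwise disjoint nondegenerate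
compact subintervals of `(0,1)` with `f(G n) = G (n+1)`. -/
theorem exists_zero_entropy_adding_machine_like_map :
    ∃ f : UI → UI, Continuous f ∧ Function.Surjective f ∧
      topEntropyNDS (fun _ => f) = 0 ∧
      (∃ ω : Set UI,
        (∃ x, omegaSet f x = ω) ∧ ω.Infinite ∧
        (∀ x, (omegaSet f x).Infinite → omegaSet f x = ω) ∧
        Nonempty (ω ≃ₜ (ℕ → Bool)) ∧
        Set.MapsTo f ω ω ∧
        (∀ x ∈ ω, ω ⊆ closure (Set.range fun n => f^[n] x))) ∧
      ¬ LiYorkeChaotic (fun _ => f) ∧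
      (∃ G : ℤ → Set UI,
        (∀ n, ∃ a b : UI, a < b ∧ (0 : ℝ) < (a : ℝ) ∧ (b : ℝ) < 1 ∧ G n = Set.Icc a b) ∧
        (Pairwise fun m n => Disjoint (G m) (G n)) ∧
        (∀ n, f '' G n = G (n + 1))) := by
  refine ⟨fUI, fUI_cont, fUI_surj, fUI_entropy, ⟨cantorUI, ⟨0, ?_⟩, cantorUI_infinite, ?_,
    ⟨cantorUIHomeo.trans cantorSetHomeomorphNatToBool⟩, ?_, ?_⟩, fUI_notLY,
    ⟨wandG, wandG_Icc, wandG_disj, wandG_image⟩⟩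
  · exact omega_EvC (EvC_of_cantor zero_mem_cantorSet)
  · intro x hx
    rcases AP_or_EvC x.2 with h | h
    · exact absurd (omega_AP h) hx
    · exact omega_EvC h
  · intro x hx
    exact cantor_iff.2 fun L => preC_inv (cantor_iff.1 hx L)
  · intro x hx w hw
    rw [Metric.mem_closure_iff]
    intro ε hε
    obtain ⟨n, -, hn⟩ := EvC_dense (EvC_of_cantor hx) hw hε 0
    refine ⟨_, ⟨n, rfl⟩, ?_⟩
    rw [dist_comm, Subtype.dist_eq, fUI_iter, Real.dist_eq]
    exact hn
end
end

section
/- Let k ∈ ℕ, n_k ∈ {0,1}^k, and η = α ∘ τ_{n_k}: Σ → Σ. Then the constant sequence 0̄ is a periodic point of η with period 2^k, and the η-orbit of 0̄ intersects the cylinder Σ_{n_k} in exactly one point, namely the sequence n_k0̄ (the block n_k followed by all zeros). -/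
open Filter Topology

noncomputable section

/-- The shift space `Σ = {0,1}^ℕ` of infinite binary sequences (with `false = 0`,
`true = 1`), carrying the product topology. -/
abbrev Sigma2 : Type := ℕ → Bool

/-- For a block `w ∈ {0,1}^k`, the map `τ_w : Σ → Σ`: identity on sequences not beginning
with `w`; on sequences beginning with `w` it keeps the first `k` symbols and swaps every
later symbol. -/
def tauMap (k : ℕ) (w : Fin k → Bool) (x : Sigma2) : Sigma2 :=
  if ∀ i : Fin k, x i = w i then (fun i => if i < k then x i else !(x i)) else x

/-- The adding machine (binary odometer) `α : Σ → Σ`, adding `1000…` coordinatewise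
mod 2 with carry to the right. -/
def addingMachine (x : Sigma2) : Sigma2 :=
  fun i => if ∀ j < i, x j = true then !(x i) else x i

/-- The constant-zero sequence `0̄`. -/
def zeroSeq : Sigma2 := fun _ => false

/-- The block `w` followed by all zeros. -/
def blockExt (k : ℕ) (w : Fin k → Bool) : Sigma2 :=
  fun i => if h : i < k then w ⟨i, h⟩ else false

/-- The cylinder `Σ_w` of sequences beginning with the block `w ∈ {0,1}^k`. -/
def cylinder (k : ℕ) (w : Fin k → Bool) : Set Sigma2 :=
  {x | ∀ i : Fin k, x i = w i}

/-- Bits of the successor. -/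
lemma testBit_succ_carry (i : ℕ) : ∀ n : ℕ, (n + 1).testBit i =
    if ∀ j < i, n.testBit j = true then !(n.testBit i) else n.testBit i := by
  induction i with
  | zero => 
    intro n
    simp only [Nat.not_lt_zero, false_imp_iff, implies_true, if_true, Nat.testBit_zero]
    rcases Nat.mod_two_eq_zero_or_one n with h | h
    · have : (n + 1) % 2 = 1 := by omega
      simp [h, this]
    · have : (n + 1) % 2 = 0 := by omega
      simp [h, this]
  | succ i ih =>
    intro n
    rw [Nat.testBit_succ, Nat.testBit_succ]
    rcases Nat.mod_two_eq_zero_or_one n with h | h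
    · have h1 : (n + 1) / 2 = n / 2 := by omega
      rw [h1, if_neg]
      intro hh
      have := hh 0 (by omega)
      simp [Nat.testBit_zero, h] at this
    · have h1 : (n + 1) / 2 = n / 2 + 1 := by omega
      rw [h1, ih]
      congr 1
      apply propext
      constructor
      · intro hh j hj
        cases j with
        | zero => simp [Nat.testBit_zero, h]
        | succ j => rw [Nat.testBit_succ]; exact hh j (by omega)
      · intro hh j hj
        rw [← Nat.testBit_succ]; exact hh (j + 1) (by omega)

lemma eq_of_low_bits {k a b : ℕ} (ha : a < 2 ^ k) (hb : b < 2 ^ k)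
    (h : ∀ i < k, a.testBit i = b.testBit i) : a = b := by
  apply Nat.eq_of_testBit_eq
  intro i
  by_cases hi : i < k
  · exact h i hi
  · have hp : 2 ^ k ≤ 2 ^ i := Nat.pow_le_pow_right (by omega) (by omega)
    rw [Nat.testBit_lt_two_pow (lt_of_lt_of_le ha hp),
      Nat.testBit_lt_two_pow (lt_of_lt_of_le hb hp)]

/-- The `n`-th point of the orbit, `m` being the integer coded by the block. -/
def orbitPt (k m n : ℕ) : Sigma2 :=
  fun i => if i < k then n.testBit i else decide (m < n ∧ n < 2 ^ k)

lemma tau_orbitPt (k m n : ℕ) (w : Fin k → Bool) (hm : m < 2 ^ k)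
    (hw : ∀ i : Fin k, m.testBit i = w i) (hn : n < 2 ^ k) :
    tauMap k w (orbitPt k m n) = fun i => if i < k then n.testBit i else decide (m ≤ n) := by
  unfold tauMap
  by_cases h : n = m
  · subst h
    rw [if_pos (by intro i; simp [orbitPt, hw])]
    funext i
    by_cases hi : i < k <;> simp [orbitPt, hi]
  · rw [if_neg]
    · funext i
      by_cases hi : i < k
      · simp [orbitPt, hi]
      · have : m < n ↔ m ≤ n := by omega
        simp [orbitPt, hi, hn, this]
    · intro hh
      apply h
      apply eq_of_low_bits hn hm
      intro i hi
      have := hh ⟨i, hi⟩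
      rw [← hw] at this
      simpa [orbitPt, hi] using this

lemma step_orbitPt (k m n : ℕ) (w : Fin k → Bool) (hm : m < 2 ^ k)
    (hw : ∀ i : Fin k, m.testBit i = w i) (hn : n < 2 ^ k) :
    (addingMachine ∘ tauMap k w) (orbitPt k m n) = orbitPt k m (n + 1) := by
  rw [Function.comp_apply, tau_orbitPt k m n w hm hw hn]
  funext i
  unfold addingMachine
  by_cases hi : i < k
  · simp only [orbitPt, hi, if_true]
    rw [testBit_succ_carry]
    congr 1
    apply propext
    constructor
    · intro hh j hj
      have := hh j hj
      rwa [if_pos (by omega)] at this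
    · intro hh j hj
      rw [if_pos (by omega)]
      exact hh j hj
  · simp only [orbitPt, hi, if_false]
    by_cases hl : n + 1 = 2 ^ k
    · have hmn : m ≤ n := by omega
      have hn' : n = 2 ^ k - 1 := by omega
      rw [if_pos]
      · simp [hl, hmn]
      · intro j hj
        by_cases hjk : j < k
        · simp [hjk, hn', Nat.testBit_two_pow_sub_one]
        · simp [hjk, hmn]
    · rw [if_neg]
      · have h1 : n + 1 < 2 ^ k := by omega
        simp [h1, Nat.lt_succ_iff]
      · intro hh
        apply hl
        have : n = 2 ^ k - 1 := by
          apply eq_of_low_bits hn (by omega)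
          intro j hj
          have := hh j (by omega)
          rw [if_pos hj] at this
          simp [this, Nat.testBit_two_pow_sub_one, hj]
        omega

/-- For `η = α ∘ τ_w`, the constant-zero sequence is periodic with (least) period `2 ^ k`,
and its `η`-orbit meets the cylinder `Σ_w` in exactly the single point `w0̄`. -/
theorem zeroSeq_periodic_orbit_meets_cylinder (k : ℕ) (w : Fin k → Bool) :
    Function.IsPeriodicPt (addingMachine ∘ tauMap k w) (2 ^ k) zeroSeq ∧
    Function.minimalPeriod (addingMachine ∘ tauMap k w) zeroSeq = 2 ^ k ∧
    (Set.range fun n => (addingMachine ∘ tauMap k w)^[n] zeroSeq) ∩ cylinder k w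
      = {blockExt k w} := by
  obtain ⟨m, hm, hw⟩ : ∃ m < 2 ^ k, ∀ i : Fin k, m.testBit i = w i :=
    ⟨Nat.ofBits w, Nat.ofBits_lt_two_pow w, fun i => by simp⟩
  have hpos : 0 < 2 ^ k := by positivity
  have hit : ∀ n ≤ 2 ^ k, (addingMachine ∘ tauMap k w)^[n] zeroSeq = orbitPt k m n := by
    intro n
    induction n with
    | zero => intro _; funext i; simp [orbitPt, zeroSeq]
    | succ n ih =>
      intro hn
      rw [Function.iterate_succ_apply', ih (by omega), step_orbitPt k m n w hm hw (by omega)]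
  have hper : Function.IsPeriodicPt (addingMachine ∘ tauMap k w) (2 ^ k) zeroSeq := by
    unfold Function.IsPeriodicPt Function.IsFixedPt
    rw [hit _ le_rfl]
    funext i
    by_cases hi : i < k
    · simp [orbitPt, zeroSeq, hi, Nat.testBit_two_pow, hi.ne']
    · simp [orbitPt, zeroSeq, hi]
  have hmin : Function.minimalPeriod (addingMachine ∘ tauMap k w) zeroSeq = 2 ^ k := by
    have hle := hper.minimalPeriod_le hpos
    have hp := hper.minimalPeriod_pos hpos
    have hpp := Function.iterate_minimalPeriod (f := addingMachine ∘ tauMap k w) (x := zeroSeq)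
    by_contra hne
    have hlt := lt_of_le_of_ne hle hne
    rw [hit _ hle] at hpp
    have := eq_of_low_bits hlt hpos (fun i hi => by
      have := congrFun hpp i
      simpa [orbitPt, zeroSeq, hi] using this)
    omega
  have hbm : orbitPt k m m = blockExt k w := by
    funext i
    by_cases hi : i < k
    · simpa [orbitPt, blockExt, hi] using hw ⟨i, hi⟩
    · simp [orbitPt, blockExt, hi]
  refine ⟨hper, hmin, ?_⟩
  ext x
  simp only [Set.mem_inter_iff, Set.mem_range, Set.mem_singleton_iff]
  constructor
  · rintro ⟨⟨n, rfl⟩, hc⟩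
    rw [← Function.iterate_mod_minimalPeriod_eq, hmin] at hc ⊢
    have hlt := Nat.mod_lt n hpos
    rw [hit _ hlt.le] at hc ⊢
    rw [← hbm]
    congr 1
    apply eq_of_low_bits hlt hm
    intro i hi
    have := hc ⟨i, hi⟩
    rw [← hw] at this
    simpa [orbitPt, hi] using this
  · rintro rfl
    refine ⟨⟨m, ?_⟩, fun i => by simp [blockExt]⟩
    rw [← hbm]
    exact hit m hm.le
end
end

section
/- Let k ∈ ℕ, n_k ∈ {0,1}^k, η = α ∘ τ_{n_k}: Σ → Σ, and let B ⊆ Σ be the set of sequences that are eventually constant (ending in all 0's or in all 1's). Then every point of B is periodic under η; moreover, each point of B either has period 2^k and lies on the η-orbit of the constant-zero sequence 0̄, or has period m·2^k for some positive integer m. -/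
open Filter Topology

noncomputable section

/-- The set `B ⊆ Σ` of eventually constant sequences. -/
def eventuallyConst : Set Sigma2 :=
  {x | ∃ N : ℕ, (∀ n ≥ N, x n = false) ∨ (∀ n ≥ N, x n = true)}

/-- value of the first `k` bits -/
def pv : ℕ → Sigma2 → ℕ
  | 0, _ => 0
  | k+1, x => pv k x + if x k = true then 2 ^ k else 0

/-- bitwise complement -/
def flipS (x : Sigma2) : Sigma2 := fun i => !(x i)

/-- tail -/
def tl (k : ℕ) (x : Sigma2) : Sigma2 := fun i => x (k + i)

lemma pv_lt (k : ℕ) (x : Sigma2) : pv k x < 2 ^ k := by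
  induction k with
  | zero => simp [pv]
  | succ k ih => simp only [pv, pow_succ]; split_ifs <;> omega

lemma pv_congr (k : ℕ) (x y : Sigma2) (h : ∀ j < k, x j = y j) : pv k x = pv k y := by
  induction k with
  | zero => rfl
  | succ k ih => simp only [pv]; rw [ih (fun j hj => h j (by omega)), h k (by omega)]

lemma pv_inj (k : ℕ) (x y : Sigma2) (h : pv k x = pv k y) : ∀ j < k, x j = y j := by
  induction k with
  | zero => intro j hj; omega
  | succ k ih =>
    simp only [pv] at h
    have h1 := pv_lt k x
    have h2 := pv_lt k y
    have h3 : x k = y k := by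
      cases hx : x k <;> cases hy : y k <;> simp [hx, hy] at h ⊢ <;> omega
    have h4 : pv k x = pv k y := by rw [h3] at h; omega
    intro j hj
    rcases Nat.lt_succ_iff_lt_or_eq.1 hj with hj | rfl
    · exact ih h4 j hj
    · exact h3

lemma pv_top (k : ℕ) (x : Sigma2) : pv k x + 1 = 2 ^ k ↔ ∀ j < k, x j = true := by
  have key : ∀ k, pv k (fun _ => true) + 1 = 2 ^ k := by
    intro k
    induction k with
    | zero => simp [pv]
    | succ k ih => simp only [pv, pow_succ, if_true]; omega
  constructor
  · intro h
    exact pv_inj k x (fun _ => true) (by have := key k; omega)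
  · intro h
    rw [pv_congr k x (fun _ => true) h, key]

lemma pv_add (k : ℕ) (x : Sigma2) :
    pv k (addingMachine x) = if pv k x + 1 = 2 ^ k then 0 else pv k x + 1 := by
  induction k with
  | zero => simp [pv]
  | succ k ih =>
    have h1 := pv_lt k x
    have h2 := pv_top k x
    have e : addingMachine x k = if pv k x + 1 = 2 ^ k then !(x k) else x k := by
      simp only [addingMachine, h2]
    simp only [pv, ih, e, pow_succ]
    by_cases h : pv k x + 1 = 2 ^ k
    · cases hx : x k <;> simp [h] <;> first | omega | (split_ifs <;> omega)
    · cases hx : x k <;> simp [h] <;> first | omega | (split_ifs <;> omega)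

lemma tl_add (k : ℕ) (x : Sigma2) :
    tl k (addingMachine x) = if pv k x + 1 = 2 ^ k then addingMachine (tl k x) else tl k x := by
  funext i
  by_cases h : pv k x + 1 = 2 ^ k
  · have h2 := (pv_top k x).1 h
    have e : (∀ j < k + i, x j = true) ↔ ∀ j < i, x (k + j) = true := by
      constructor
      · intro g j hj; exact g _ (by omega)
      · intro g j hj
        by_cases hk : j < k
        · exact h2 j hk
        · have := g (j - k) (by omega)
          rwa [show k + (j - k) = j by omega] at this
    simp only [h, if_true, tl, addingMachine, e]
    congr
  · have h2 := mt (pv_top k x).2 h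
    have e : ¬ (∀ j < k + i, x j = true) := fun g => h2 fun j hj => g j (by omega)
    simp only [h, if_false, tl, addingMachine, e]

lemma flip_add (x : Sigma2) : flipS (addingMachine (flipS (addingMachine x))) = x := by
  funext i
  have e : (∀ j < i, flipS (addingMachine x) j = true) ↔ ∀ j < i, x j = true := by
    constructor
    · intro h j
      induction j using Nat.strong_induction_on with
      | _ j ih =>
        intro hj
        have h1 := h j hj
        have h2 : ∀ l < j, x l = true := fun l hl => ih l hl (by omega)
        simpa [flipS, addingMachine, if_pos h2] using h1
    · intro h j hj
      have h2 : ∀ l < j, x l = true := fun l hl => h l (by omega)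
      simp [flipS, addingMachine, if_pos h2, h j hj]
  show (!(if (∀ j < i, flipS (addingMachine x) j = true) then !(flipS (addingMachine x) i)
    else flipS (addingMachine x) i)) = x i
  by_cases h : ∀ j < i, x j = true
  · rw [if_pos (e.2 h)]; simp [flipS, addingMachine, if_pos h]
  · rw [if_neg (mt e.1 h)]; simp [flipS, addingMachine, if_neg h]

lemma flipS_flipS (x : Sigma2) : flipS (flipS x) = x := by
  funext i; simp [flipS]

lemma add_flip (x : Sigma2) : addingMachine (flipS (addingMachine (flipS x))) = x := by
  have h := congrArg flipS (flip_add (flipS x))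
  simpa only [flipS_flipS] using h

lemma add_inj : Function.Injective addingMachine := by
  intro x y h
  rw [← flip_add x, h, flip_add]

lemma tau_cond (k : ℕ) (w : Fin k → Bool) (x : Sigma2) :
    (∀ i : Fin k, x i = w i) ↔ pv k x = pv k (blockExt k w) := by
  constructor
  · intro h
    apply pv_congr
    intro j hj
    simpa [blockExt, hj] using h ⟨j, hj⟩
  · intro h i
    have := pv_inj k _ _ h i i.2
    simpa [blockExt] using this

lemma pv_tau (k : ℕ) (w : Fin k → Bool) (x : Sigma2) : pv k (tauMap k w x) = pv k x := by
  apply pv_congr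
  intro j hj
  unfold tauMap
  split_ifs <;> simp [hj]

lemma tl_tau (k : ℕ) (w : Fin k → Bool) (x : Sigma2) :
    tl k (tauMap k w x) = if pv k x = pv k (blockExt k w) then flipS (tl k x) else tl k x := by
  unfold tauMap
  simp only [tau_cond]
  split_ifs
  · funext i; simp [tl, flipS]
  · rfl

lemma ext_pv (k : ℕ) (x y : Sigma2) (h : pv k x = pv k y) (h' : tl k x = tl k y) : x = y := by
  funext i
  by_cases hi : i < k
  · exact pv_inj k x y h i hi
  · have := congrFun h' (i - k)
    simpa [tl, show k + (i - k) = i by omega] using this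

lemma tau_tau (k : ℕ) (w : Fin k → Bool) (x : Sigma2) : tauMap k w (tauMap k w x) = x := by
  apply ext_pv k
  · simp only [pv_tau]
  · simp only [tl_tau, pv_tau]
    split_ifs <;> simp [flipS_flipS]

lemma eta_inj (k : ℕ) (w : Fin k → Bool) : Function.Injective (addingMachine ∘ tauMap k w) :=
  add_inj.comp (Function.LeftInverse.injective (tau_tau k w))

lemma pv_eta (k : ℕ) (w : Fin k → Bool) (x : Sigma2) :
    pv k ((addingMachine ∘ tauMap k w) x) = if pv k x + 1 = 2 ^ k then 0 else pv k x + 1 := by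
  simp only [Function.comp, pv_add, pv_tau]

lemma tl_eta (k : ℕ) (w : Fin k → Bool) (x : Sigma2) :
    tl k ((addingMachine ∘ tauMap k w) x) =
      if pv k x + 1 = 2 ^ k then addingMachine (tl k (tauMap k w x))
      else tl k (tauMap k w x) := by
  simp only [Function.comp, tl_add, pv_tau]

lemma pv_iter (k : ℕ) (w : Fin k → Bool) (x : Sigma2) (n : ℕ) :
    pv k ((addingMachine ∘ tauMap k w)^[n] x) = (pv k x + n) % 2 ^ k := by
  induction n with
  | zero => simp [Nat.mod_eq_of_lt (pv_lt k x)]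
  | succ n ih =>
    rw [Function.iterate_succ_apply', pv_eta, ih, ← add_assoc]
    have h := Nat.mod_lt (pv k x + n) (Nat.two_pow_pos k)
    rw [Nat.add_mod_eq_ite (m := pv k x + n) (n := 1)]
    rcases Nat.eq_zero_or_pos k with rfl | hk
    · simp [Nat.mod_one]
    · have h1 : 1 < 2 ^ k := Nat.one_lt_two_pow (by omega)
      rw [Nat.mod_eq_of_lt h1]
      split_ifs <;> omega

lemma tl_iter (k : ℕ) (w : Fin k → Bool) (x : Sigma2) (hx : pv k x = 0) (n : ℕ) (hn : n < 2 ^ k) :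
    tl k ((addingMachine ∘ tauMap k w)^[n] x) =
      if n ≤ pv k (blockExt k w) then tl k x else flipS (tl k x) := by
  induction n with
  | zero => simp
  | succ n ih =>
    have hp := pv_iter k w x n
    rw [hx, zero_add, Nat.mod_eq_of_lt (by omega)] at hp
    rw [Function.iterate_succ_apply', tl_eta, tl_tau, hp, ih (by omega), if_neg (by omega)]
    split_ifs <;> first | rfl | omega

lemma half (k : ℕ) (w : Fin k → Bool) (x : Sigma2) (hx : pv k x = 0) :
    tl k ((addingMachine ∘ tauMap k w)^[2 ^ k] x) = addingMachine (flipS (tl k x)) := by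
  have h0 := Nat.two_pow_pos k
  obtain ⟨n, hn⟩ : ∃ n, 2 ^ k = n + 1 := ⟨2 ^ k - 1, by omega⟩
  have hp := pv_iter k w x n
  have hw := pv_lt k (blockExt k w)
  rw [hx, zero_add, Nat.mod_eq_of_lt (by omega)] at hp
  have ht := tl_iter k w x hx n (by omega)
  rw [hn, Function.iterate_succ_apply', tl_eta, tl_tau, hp, ht, if_pos hn.symm]
  split_ifs <;> first | rfl | omega

lemma full (k : ℕ) (w : Fin k → Bool) (x : Sigma2) (hx : pv k x = 0) :
    (addingMachine ∘ tauMap k w)^[2 ^ k + 2 ^ k] x = x := by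
  apply ext_pv k
  · rw [pv_iter, hx]; simp
  · rw [Function.iterate_add_apply, half, half k w x hx, add_flip]
    rw [pv_iter, hx]; simp

lemma full' (k : ℕ) (w : Fin k → Bool) (x : Sigma2) :
    (addingMachine ∘ tauMap k w)^[2 ^ k + 2 ^ k] x = x := by
  have h := pv_lt k x
  apply (eta_inj k w).iterate (2 ^ k - pv k x)
  rw [← Function.iterate_add_apply, add_comm, Function.iterate_add_apply]
  apply full
  rw [pv_iter, show pv k x + (2 ^ k - pv k x) = 2 ^ k by omega, Nat.mod_self]

/-- For `η = α ∘ τ_w`, every eventually constant sequence is periodic under `η`; moreover it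
either has least period `2 ^ k` and lies on the `η`-orbit of `0̄`, or has least period
`m * 2 ^ k` for some positive integer `m`. -/
theorem eventuallyConst_periodic (k : ℕ) (w : Fin k → Bool) :
    ∀ x ∈ eventuallyConst,
      x ∈ Function.periodicPts (addingMachine ∘ tauMap k w) ∧
      ((Function.minimalPeriod (addingMachine ∘ tauMap k w) x = 2 ^ k ∧
          ∃ n : ℕ, (addingMachine ∘ tauMap k w)^[n] zeroSeq = x) ∨
        (∃ m : ℕ, 0 < m ∧
          Function.minimalPeriod (addingMachine ∘ tauMap k w) x = m * 2 ^ k)) := by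
  intro x _
  have hper : Function.IsPeriodicPt (addingMachine ∘ tauMap k w) (2 ^ k + 2 ^ k) x := full' k w x
  have hpos : 0 < 2 ^ k + 2 ^ k := by positivity
  have hmem := Function.mk_mem_periodicPts hpos hper
  refine ⟨hmem, Or.inr ?_⟩
  have hmp := Function.minimalPeriod_pos_of_mem_periodicPts hmem
  have hdvd : 2 ^ k ∣ Function.minimalPeriod (addingMachine ∘ tauMap k w) x := by
    have h := pv_iter k w x (Function.minimalPeriod (addingMachine ∘ tauMap k w) x)
    rw [Function.iterate_minimalPeriod] at h
    have h2 : pv k x + 0 ≡ pv k x + Function.minimalPeriod (addingMachine ∘ tauMap k w) x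
        [MOD 2 ^ k] := by
      unfold Nat.ModEq
      rw [← h, add_zero, Nat.mod_eq_of_lt (pv_lt k x)]
    exact (Nat.modEq_zero_iff_dvd).1 (Nat.ModEq.add_left_cancel' _ h2).symm
  obtain ⟨m, hm⟩ := hdvd
  refine ⟨m, ?_, by rw [hm, mul_comm]⟩
  rcases Nat.eq_zero_or_pos m with rfl | h
  · simp at hm; omega
  · exact h
end
end
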